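/- For every N > 0 there exist constants K > 0 and C > 0 such that for all ν with 0 ≤ ν ≤ N, every integer k ≥ K, every j that is the k-th positive zero of J_ν, and every x* ≥ ν satisfying x*·g(ν/x*) = k − 1/4, one has | j − x* | ≤ C/(ν + k). -/

import Mathlib

open Real MeasureTheory Set

/-- The Bessel function of the first kind of order `ν ≥ 0`, for `x > 0`, via the
integral representation. -/
noncomputable def besselJ (ν x : ℝ) : ℝ :=
  (1 / π) * (∫ θ in (0:ℝ)..π, Real.cos (x * Real.sin θ - ν * θ)) -
    (Real.sin (ν * π) / π) * ∫ t in Set.Ioi (0:ℝ), Real.exp (-x * Real.sinh t - ν * t)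

/-- The function `g(t) = (√(1-t²) - t arccos t)/π`. -/
noncomputable def gfun (t : ℝ) : ℝ := (Real.sqrt (1 - t ^ 2) - t * Real.arccos t) / π

/-- `j` is the `k`-th positive zero of `J_ν`: `j > 0`, `J_ν(j) = 0`, and there are exactly
`k - 1` zeros of `J_ν` in `(0, j)`. -/
def IsKthZero (ν : ℝ) (k : ℕ) (j : ℝ) : Prop :=
  0 < j ∧ besselJ ν j = 0 ∧ {x : ℝ | 0 < x ∧ x < j ∧ besselJ ν x = 0}.ncard = k - 1

section Fresnel
open Complex Filter Topology

lemma fr_norm {b : ℂ} (hb : 0 ≤ b.re) (s : ℝ) : ‖cexp (-b * (s:ℂ)^2)‖ ≤ 1 := by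
  rw [Complex.norm_exp]
  rw [Real.exp_le_one_iff]
  have : (-b * (s:ℂ)^2).re = -b.re * s^2 := by
    rw [← Complex.ofReal_pow, Complex.re_mul_ofReal]; simp
  rw [this]
  nlinarith [sq_nonneg s]

lemma fr_cont (b : ℂ) : Continuous fun s : ℝ => cexp (-b * (s:ℂ)^2) := by fun_prop

noncomputable def frTail (b : ℂ) : ℂ := ∫ s in Ioi (1:ℝ), cexp (-b * (s:ℂ)^2) / (2 * (s:ℂ)^2)

lemma fr_dom : IntegrableOn (fun s : ℝ => 1 / (2 * s^2)) (Ioi (1:ℝ)) := by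
  have : IntegrableOn (fun s : ℝ => (1/2:ℝ) * s ^ (-2:ℝ)) (Ioi (1:ℝ)) :=
    (integrableOn_Ioi_rpow_of_lt (a := -2) (c := 1) (by norm_num) (by norm_num)).const_mul (1/2)
  refine this.congr_fun ?_ measurableSet_Ioi
  intro s hs
  have hs : (1:ℝ) < s := hs
  simp only
  rw [Real.rpow_neg (by linarith)]
  norm_cast
  field_simp

lemma fr_bd {b : ℂ} (hb : 0 ≤ b.re) (s : ℝ) :
    ‖cexp (-b * (s:ℂ)^2) / (2 * (s:ℂ)^2)‖ ≤ 1 / (2 * s^2) := by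
  rw [norm_div]
  have : ‖(2 * (s:ℂ)^2)‖ = 2 * s^2 := by
    simp
  rw [this]
  gcongr
  exact fr_norm hb s

lemma fr_meas (b : ℂ) : AEStronglyMeasurable (fun s : ℝ => cexp (-b * (s:ℂ)^2) / (2 * (s:ℂ)^2))
    (volume.restrict (Ioi (1:ℝ))) := by
  apply Measurable.aestronglyMeasurable
  fun_prop

lemma fr_int {b : ℂ} (hb : 0 ≤ b.re) :
    IntegrableOn (fun s : ℝ => cexp (-b * (s:ℂ)^2) / (2 * (s:ℂ)^2)) (Ioi (1:ℝ)) := by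
  refine Integrable.mono' fr_dom (fr_meas b) ?_
  exact Eventually.of_forall (fun s => fr_bd hb s)

noncomputable def frA (b : ℂ) : ℂ :=
  (∫ s in (0:ℝ)..1, cexp (-b * (s:ℂ)^2)) + (cexp (-b) / (2 * b) - frTail b / b)

lemma fr_parts {b : ℂ} (hb0 : b ≠ 0) {T : ℝ} (hT : 1 ≤ T) :
    ∫ s in (1:ℝ)..T, cexp (-b * (s:ℂ)^2) =
      (cexp (-b) / (2 * b) - cexp (-b * (T:ℂ)^2) / (2 * b * T)) -
       (∫ s in (1:ℝ)..T, cexp (-b * (s:ℂ)^2) / (2 * (s:ℂ)^2)) / b := by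
  have hpos : ∀ s ∈ uIcc (1:ℝ) T, (s:ℂ) ≠ 0 := by
    intro s hs
    rw [uIcc_of_le hT] at hs
    have : (0:ℝ) < s := by linarith [hs.1]
    exact_mod_cast this.ne'
  have hd : ∀ s ∈ uIcc (1:ℝ) T, HasDerivAt (fun s : ℝ => - cexp (-b * (s:ℂ)^2) / (2 * b * s))
      (cexp (-b * (s:ℂ)^2) + cexp (-b * (s:ℂ)^2) / (2 * (s:ℂ)^2) / b) s := by
    intro s hs
    have h0 := hpos s hs
    have h1 : HasDerivAt (fun z : ℂ => - cexp (-b * z^2) / (2 * b * z))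
      (cexp (-b * (s:ℂ)^2) + cexp (-b * (s:ℂ)^2) / (2 * (s:ℂ)^2) / b) (s:ℂ) := by
      have ha : HasDerivAt (fun z : ℂ => -b * z^2) (-b * (2 * (s:ℂ))) (s:ℂ) := by
        simpa using (hasDerivAt_pow 2 (s:ℂ)).const_mul (-b)
      have hb2 : HasDerivAt (fun z : ℂ => 2 * b * z) (2 * b) (s:ℂ) := by
        simpa using (hasDerivAt_id (s:ℂ)).const_mul (2*b)
      have := (ha.cexp.neg).div hb2 (by simp [hb0, h0])
      refine this.congr_deriv ?_
      simp only [Pi.neg_apply]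
      field_simp
      ring
    exact h1.comp_ofReal
  have hc2 : ContinuousOn (fun s : ℝ => cexp (-b * (s:ℂ)^2) / (2 * (s:ℂ)^2)) (uIcc 1 T) := by
    apply ContinuousOn.div (by fun_prop) (by fun_prop)
    intro s hs
    simp [hpos s hs]
  have hi1 : IntervalIntegrable (fun s : ℝ => cexp (-b * (s:ℂ)^2)) volume 1 T :=
    (fr_cont b).intervalIntegrable _ _
  have hi2 : IntervalIntegrable (fun s : ℝ => cexp (-b * (s:ℂ)^2) / (2 * (s:ℂ)^2) / b) volume 1 T :=
    (hc2.div_const b).intervalIntegrable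
  have := intervalIntegral.integral_eq_sub_of_hasDerivAt hd (hi1.add hi2)
  rw [intervalIntegral.integral_add hi1 hi2, intervalIntegral.integral_div] at this
  rw [eq_sub_iff_add_eq, this]
  simp
  ring

lemma fr_tendsto {b : ℂ} (hb : 0 ≤ b.re) (hb0 : b ≠ 0) :
    Tendsto (fun T : ℝ => ∫ s in (0:ℝ)..T, cexp (-b * (s:ℂ)^2)) atTop (𝓝 (frA b)) := by
  have h1 : Tendsto (fun T : ℝ => (∫ s in (0:ℝ)..1, cexp (-b * (s:ℂ)^2)) +
      ((cexp (-b) / (2 * b) - cexp (-b * (T:ℂ)^2) / (2 * b * T)) -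
       (∫ s in (1:ℝ)..T, cexp (-b * (s:ℂ)^2) / (2 * (s:ℂ)^2)) / b)) atTop
       (𝓝 ((∫ s in (0:ℝ)..1, cexp (-b * (s:ℂ)^2)) + ((cexp (-b) / (2 * b) - 0) - frTail b / b))) := by
    refine tendsto_const_nhds.add ((tendsto_const_nhds.sub ?_).sub ?_)
    · rw [tendsto_zero_iff_norm_tendsto_zero]
      have h2 : Tendsto (fun T : ℝ => (1 / ‖2 * b‖) * T⁻¹) atTop (𝓝 0) := by
        simpa using tendsto_inv_atTop_zero.const_mul (1 / ‖2 * b‖)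
      refine squeeze_zero' (Eventually.of_forall fun _ => norm_nonneg _) ?_ h2
      filter_upwards [eventually_gt_atTop 0] with T hT
      rw [norm_div, norm_mul (2 * b), Complex.norm_real, Real.norm_of_nonneg hT.le]
      rw [div_mul_eq_div_div, div_eq_mul_inv _ T]
      gcongr
      exact fr_norm hb T
    · exact (intervalIntegral_tendsto_integral_Ioi 1 (fr_int hb) tendsto_id).div_const b
  have h3 : frA b = (∫ s in (0:ℝ)..1, cexp (-b * (s:ℂ)^2)) +
     ((cexp (-b) / (2 * b) - 0) - frTail b / b) := by simp [frA]
  rw [h3]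
  refine h1.congr' ?_
  filter_upwards [eventually_ge_atTop 1] with T hT
  rw [← fr_parts hb0 hT]
  exact intervalIntegral.integral_add_adjacent_intervals ((fr_cont b).intervalIntegrable _ _)
    ((fr_cont b).intervalIntegrable _ _)

lemma frA_eq {b : ℂ} (hb : 0 < b.re) : frA b = (π / b) ^ (1 / 2 : ℂ) / 2 := by
  have hb0 : b ≠ 0 := by rintro rfl; simp at hb
  rw [← integral_gaussian_complex_Ioi hb]
  refine tendsto_nhds_unique (fr_tendsto hb.le hb0) ?_
  exact intervalIntegral_tendsto_integral_Ioi 0 (integrable_cexp_neg_mul_sq hb).integrableOn tendsto_id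

lemma frTail_cont : ContinuousWithinAt frTail {b : ℂ | 0 ≤ b.re} I := by
  refine continuousWithinAt_of_dominated (bound := fun s : ℝ => 1 / (2 * s^2)) ?_ ?_ fr_dom ?_
  · exact Eventually.of_forall fun b => fr_meas b
  · filter_upwards [self_mem_nhdsWithin] with b hb
    exact Eventually.of_forall fun s => fr_bd hb s
  · refine Eventually.of_forall fun s => Continuous.continuousWithinAt ?_
    fun_prop

lemma frA_cont : ContinuousWithinAt frA {b : ℂ | 0 ≤ b.re} I := by
  unfold frA
  refine ContinuousWithinAt.add ?_ (ContinuousWithinAt.sub ?_ ?_)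
  · refine Continuous.continuousWithinAt ?_
    exact intervalIntegral.continuous_parametric_intervalIntegral_of_continuous' (by fun_prop) _ _
  · refine ContinuousAt.continuousWithinAt ?_
    refine ContinuousAt.div (by fun_prop) (by fun_prop) (by simp)
  · exact frTail_cont.div continuousWithinAt_id (by simp)

lemma frA_I : frA I = (π / I) ^ (1 / 2 : ℂ) / 2 := by
  have h1 : Tendsto frA (𝓝[{b : ℂ | 0 < b.re}] I) (𝓝 (frA I)) :=
    frA_cont.mono (fun b (hb : 0 < b.re) => (le_of_lt hb : 0 ≤ b.re))
  have h2 : Tendsto frA (𝓝[{b : ℂ | 0 < b.re}] I) (𝓝 ((π / I) ^ (1 / 2 : ℂ) / 2)) := by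
    have h3 : ContinuousAt (fun b : ℂ => (π / b) ^ (1 / 2 : ℂ) / 2) I := by
      refine ContinuousAt.div_const ?_ _
      refine ContinuousAt.cpow (ContinuousAt.div (by fun_prop) (by fun_prop) (by simp)) continuousAt_const ?_
      rw [Complex.mem_slitPlane_iff]
      right
      simp [Real.pi_ne_zero]
    refine (h3.continuousWithinAt (s := {b : ℂ | 0 < b.re})).tendsto.congr' ?_
    filter_upwards [self_mem_nhdsWithin] with b hb
    exact (frA_eq hb).symm
  have : (𝓝[{b : ℂ | 0 < b.re}] I).NeBot := by
    rw [← mem_closure_iff_nhdsWithin_neBot, Complex.closure_setOfPred_lt_re]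
    simp
  exact tendsto_nhds_unique h1 h2

lemma frA_I' : frA I = (√π / 2 : ℝ) * cexp (-(π / 4 : ℝ) * I) := by
  rw [frA_I]
  have h1 : (π / I : ℂ) = (π : ℝ) * cexp ((-(π/2) : ℝ) * I) := by
    have := Complex.exp_neg_pi_div_two_mul_I
    push_cast
    rw [show -((π:ℂ)/2) * I = -π/2 * I by ring, this]
    simp
  rw [h1, Complex.cpow_def_of_ne_zero (by simp [Real.pi_ne_zero]), Complex.log_ofReal_mul Real.pi_pos (by simp)]
  rw [Complex.log_exp (by simp; linarith [Real.pi_pos]) (by simp; linarith [Real.pi_pos])]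
  rw [add_mul, Complex.exp_add]
  have h2 : cexp ((Real.log π : ℝ) * (1/2 : ℂ)) = ((√π : ℝ) : ℂ) := by
    rw [show ((Real.log π : ℝ) * (1/2 : ℂ)) = ((Real.log π * (1/2) : ℝ) : ℂ) by push_cast; ring]
    rw [← Complex.ofReal_exp, Real.sqrt_eq_rpow, Real.rpow_def_of_pos Real.pi_pos]
  rw [h2]
  have h3 : ((-(π/2) : ℝ) * I : ℂ) * (1/2) = -(π / 4 : ℝ) * I := by push_cast; ring
  rw [h3]
  push_cast
  ring

lemma fresnel_sym : Tendsto (fun T : ℝ => ∫ s in (-T)..T, cexp (-I * (s:ℂ)^2)) atTop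
    (𝓝 ((√π : ℝ) * cexp (-(π / 4 : ℝ) * I))) := by
  have h := (fr_tendsto (b := I) (by simp) (by simp)).const_mul 2
  rw [frA_I'] at h
  have e : (2:ℂ) * ((√π / 2 : ℝ) * cexp (-(π / 4 : ℝ) * I)) = (√π : ℝ) * cexp (-(π / 4 : ℝ) * I) := by
    push_cast; ring
  rw [e] at h
  refine h.congr fun T => ?_
  have h1 : ∫ s in (-T)..0, cexp (-I * (s:ℂ)^2) = ∫ s in (0:ℝ)..T, cexp (-I * (s:ℂ)^2) := by
    have := intervalIntegral.integral_comp_neg (a := 0) (b := T) (fun s : ℝ => cexp (-I * (s:ℂ)^2))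
    simpa using this.symm
  rw [← intervalIntegral.integral_add_adjacent_intervals ((fr_cont I).intervalIntegrable (-T) 0)
    ((fr_cont I).intervalIntegrable 0 T), h1]
  ring

end Fresnel

section StatPhase
open Complex Filter Topology

lemma sp_quot (ν : ℝ) : ∃ q q' : ℝ → ℂ, ContinuousOn q' (uIcc (-(π/2)) (π/2)) ∧
    (∀ φ ∈ uIcc (-(π/2)) (π/2), HasDerivAt q (q' φ) φ) ∧
    (∀ φ ∈ uIcc (-(π/2)) (π/2), cexp (-(ν * φ : ℝ) * I) - (Real.cos (φ/2) : ℝ)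
       = q φ * (Real.sin φ : ℝ)) := by
  let a : ℂ → ℂ := fun z => cexp (-(ν * z) * I) - Complex.cos (z/2)
  have ha : Differentiable ℂ a := by
    intro z; fun_prop
  have ha0 : a 0 = 0 := by simp [a]
  have hda : DifferentiableOn ℂ (dslope a 0) univ :=
    (Complex.differentiableOn_dslope univ_mem).2 ha.differentiableOn
  have hds : DifferentiableOn ℂ (dslope Complex.sin 0) univ :=
    (Complex.differentiableOn_dslope univ_mem).2 Complex.differentiable_sin.differentiableOn
  let U : Set ℂ := {z | dslope Complex.sin 0 z ≠ 0}
  have hU : IsOpen U := by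
    have hc : Continuous (dslope Complex.sin 0) := by
      rw [← continuousOn_univ]; exact hds.continuousOn
    exact isOpen_ne_fun hc continuous_const
  let Q : ℂ → ℂ := fun z => dslope a 0 z / dslope Complex.sin 0 z
  have hQ : DifferentiableOn ℂ Q U :=
    (hda.mono (subset_univ _)).div (hds.mono (subset_univ _)) (fun z hz => hz)
  have hQ' : ContinuousOn (deriv Q) U := (hQ.deriv hU).continuousOn
  have hmem : ∀ φ ∈ uIcc (-(π/2)) (π/2), ((φ:ℝ):ℂ) ∈ U := by
    intro φ hφ
    have hpi := Real.pi_pos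
    rw [uIcc_of_le (by linarith)] at hφ
    change dslope Complex.sin 0 (φ:ℂ) ≠ 0
    by_cases h0 : φ = 0
    · subst h0; simp
    · rw [dslope_of_ne _ (by exact_mod_cast h0), slope_def_field]
      have : Real.sin φ ≠ 0 := by
        intro h
        rw [Real.sin_eq_zero_iff_of_lt_of_lt (by linarith [hφ.1]) (by linarith [hφ.2])] at h
        exact h0 h
      simp only [Complex.sin_zero, sub_zero]
      rw [← Complex.ofReal_sin]
      exact div_ne_zero (by exact_mod_cast this) (by exact_mod_cast h0)
  refine ⟨fun φ => Q φ, fun φ => deriv Q φ, ?_, ?_, ?_⟩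
  · exact hQ'.comp Complex.continuous_ofReal.continuousOn hmem
  · intro φ hφ
    exact ((hQ.differentiableAt (hU.mem_nhds (hmem φ hφ))).hasDerivAt).comp_ofReal
  · intro φ hφ
    have h1 : a φ = φ * dslope a 0 φ := by
      have := sub_smul_dslope a 0 (φ:ℂ)
      simp [ha0] at this
      exact this.symm
    have h2 : Complex.sin φ = φ * dslope Complex.sin 0 φ := by
      have := sub_smul_dslope Complex.sin 0 (φ:ℂ)
      simp at this
      exact this.symm
    have h3 : cexp (-(ν * φ : ℝ) * I) - (Real.cos (φ/2) : ℝ) = a φ := by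
      simp [a]
    have h4 : dslope Complex.sin 0 (φ:ℂ) ≠ 0 := hmem φ hφ
    rw [h3, h1, Complex.ofReal_sin, h2]
    simp only [Q]
    field_simp

lemma sp_norm (t : ℝ) : ‖cexp (t * I)‖ = 1 := Complex.norm_exp_ofReal_mul_I t

lemma sp_diff (ν : ℝ) : ∃ C : ℝ, ∀ x : ℝ, 0 < x →
    ‖∫ φ in (-(π/2))..(π/2), cexp ((x * Real.cos φ : ℝ) * I) *
      (cexp (-(ν * φ : ℝ) * I) - (Real.cos (φ/2) : ℝ))‖ ≤ C / x := by
  obtain ⟨q, q', hc, hd, he⟩ := sp_quot ν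
  refine ⟨‖q (π/2)‖ + ‖q (-(π/2))‖ + ∫ φ in (-(π/2))..(π/2), ‖q' φ‖, fun x hx => ?_⟩
  have hpi := Real.pi_pos
  have hx' : (x:ℂ) ≠ 0 := by exact_mod_cast hx.ne'
  have hE : ∀ φ ∈ uIcc (-(π/2)) (π/2), HasDerivAt (fun φ : ℝ => (I / x) * cexp ((x * Real.cos φ : ℝ) * I))
      ((Real.sin φ : ℝ) * cexp ((x * Real.cos φ : ℝ) * I)) φ := by
    intro φ _
    have h1 : HasDerivAt (fun φ : ℝ => ((x * Real.cos φ : ℝ) : ℂ) * I) (((x * -Real.sin φ : ℝ):ℂ) * I) φ :=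
      (((Real.hasDerivAt_cos φ).const_mul x).ofReal_comp).mul_const I
    refine (h1.cexp.const_mul (I / x)).congr_deriv ?_
    push_cast
    field_simp
    rw [Complex.I_sq]
    ring
  have hq'i : IntervalIntegrable q' volume (-(π/2)) (π/2) := hc.intervalIntegrable
  have hparts := intervalIntegral.integral_mul_deriv_eq_deriv_mul hd hE hq'i
    (Continuous.intervalIntegrable (by fun_prop) _ _)
  have h0 : ∫ φ in (-(π/2))..(π/2), cexp ((x * Real.cos φ : ℝ) * I) *
      (cexp (-(ν * φ : ℝ) * I) - (Real.cos (φ/2) : ℝ)) =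
      ∫ φ in (-(π/2))..(π/2), q φ * ((Real.sin φ : ℝ) * cexp ((x * Real.cos φ : ℝ) * I)) := by
    apply intervalIntegral.integral_congr
    intro φ hφ
    simp only
    rw [he φ hφ]
    ring
  rw [h0, hparts]
  have hn : ∀ φ : ℝ, ‖(I / x) * cexp ((x * Real.cos φ : ℝ) * I)‖ = 1 / x := by
    intro φ
    rw [norm_mul, sp_norm, norm_div, Complex.norm_I, Complex.norm_real, Real.norm_of_nonneg hx.le, mul_one]
  have hqint : ‖∫ φ in (-(π/2))..(π/2), q' φ * ((I / x) * cexp ((x * Real.cos φ : ℝ) * I))‖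
      ≤ (∫ φ in (-(π/2))..(π/2), ‖q' φ‖) / x := by
    refine (intervalIntegral.norm_integral_le_integral_norm (by linarith)).trans ?_
    rw [← intervalIntegral.integral_div]
    apply le_of_eq
    apply intervalIntegral.integral_congr
    intro φ _
    simp only
    rw [norm_mul, hn]
    ring
  refine (norm_sub_le _ _).trans ?_
  rw [add_div]
  refine add_le_add ?_ hqint
  refine (norm_sub_le _ _).trans ?_
  rw [norm_mul (q (π/2)), norm_mul (q (-(π/2))), hn, hn]
  apply le_of_eq
  ring

lemma sp_ref {x : ℝ} (hx : 0 < x) :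
    ∫ φ in (-(π/2))..(π/2), cexp ((x * Real.cos φ : ℝ) * I) * (Real.cos (φ/2) : ℝ) =
      (√(2/x) : ℝ) * cexp (x * I) * ∫ s in (-√x)..(√x), cexp (-I * (s:ℂ)^2) := by
  have hd : ∀ φ ∈ uIcc (-(π/2)) (π/2), HasDerivAt (fun φ : ℝ => √(2*x) * Real.sin (φ/2))
      (√(2*x) * (Real.cos (φ/2) * (1/2))) φ := by
    intro φ _
    exact (((hasDerivAt_id φ).div_const 2).sin).const_mul _
  have h := intervalIntegral.integral_deriv_smul_comp (a := -(π/2)) (b := π/2) hd (by fun_prop) (fr_cont I)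
  have h2x : 0 ≤ 2 * x := by linarith
  have e1 : √(2*x) * Real.sin (π/2/2) = √x := by
    rw [show π/2/2 = π/4 by ring, Real.sin_pi_div_four, Real.sqrt_mul (by norm_num)]
    have := Real.mul_self_sqrt (show (0:ℝ) ≤ 2 by norm_num)
    linear_combination (√x / 2) * this
  have e2 : √(2*x) * Real.sin (-(π/2)/2) = -√x := by
    rw [show -(π/2)/2 = -(π/2/2) by ring, Real.sin_neg, mul_neg, e1]
  rw [e1, e2] at h
  rw [← h, ← intervalIntegral.integral_const_mul]
  apply intervalIntegral.integral_congr
  intro φ _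
  simp only [Function.comp]
  have e3 : √(2/x) * (√(2*x) * (Real.cos (φ/2) * (1/2))) = Real.cos (φ/2) := by
    rw [← mul_assoc, ← Real.sqrt_mul (by positivity), show 2/x*(2*x) = 2^2 by field_simp,
      Real.sqrt_sq (by norm_num)]
    ring
  have e4 : cexp ((x * Real.cos φ : ℝ) * I) = cexp (x * I) *
      cexp (-I * ((√(2*x) * Real.sin (φ/2) : ℝ) : ℂ)^2) := by
    rw [← Complex.exp_add]
    congr 1
    rw [← Complex.ofReal_pow, mul_pow, Real.sq_sqrt h2x]
    have : Real.cos φ = 1 - 2 * Real.sin (φ/2)^2 := by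
      have := Real.cos_two_mul (φ/2)
      rw [show 2 * (φ/2) = φ by ring] at this
      rw [this, Real.cos_sq']; ring
    rw [this]
    push_cast
    ring
  rw [e4]
  conv_lhs => rw [← e3]
  rw [Complex.real_smul]
  push_cast
  ring

lemma sp_shift (ν x : ℝ) : ∫ θ in (0:ℝ)..π, Real.cos (x * Real.sin θ - ν * θ) =
    (cexp (-(ν * π / 2 : ℝ) * I) * ∫ φ in (-(π/2))..(π/2), cexp ((x * Real.cos φ : ℝ) * I) *
      cexp (-(ν * φ : ℝ) * I)).re := by
  have h1 := intervalIntegral.integral_comp_add_right (a := -(π/2)) (b := π/2)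
    (fun θ : ℝ => Real.cos (x * Real.sin θ - ν * θ)) (π/2)
  rw [show -(π/2) + π/2 = 0 by ring, show π/2 + π/2 = π by ring] at h1
  rw [← h1, ← intervalIntegral.integral_const_mul]
  have h2 := Complex.reCLM.intervalIntegral_comp_comm (μ := volume) (a := -(π/2)) (b := π/2)
    (f := fun φ : ℝ => cexp (-(ν * π / 2 : ℝ) * I) * (cexp ((x * Real.cos φ : ℝ) * I) *
      cexp (-(ν * φ : ℝ) * I))) (Continuous.intervalIntegrable (by fun_prop) _ _)
  simp only [Complex.reCLM_apply] at h2
  rw [← h2]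
  apply intervalIntegral.integral_congr
  intro φ _
  simp only
  rw [← Complex.exp_add, ← Complex.exp_add]
  have : (-(ν * π / 2 : ℝ) * I + ((x * Real.cos φ : ℝ) * I + -(ν * φ : ℝ) * I) : ℂ) =
     ((x * Real.cos φ - ν * (φ + π/2) : ℝ) : ℂ) * I := by push_cast; ring
  rw [this, Complex.exp_ofReal_mul_I_re, Real.sin_add_pi_div_two]

lemma statphase (ν : ℝ) : Tendsto (fun x : ℝ =>
    √x * (∫ θ in (0:ℝ)..π, Real.cos (x * Real.sin θ - ν * θ)) -
      √(2*π) * Real.cos (x - ν * π / 2 - π / 4)) atTop (𝓝 0) := by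
  obtain ⟨C, hC⟩ := sp_diff ν
  have hfr : Tendsto (fun x : ℝ => ‖(∫ s in (-√x)..(√x), cexp (-I * (s:ℂ)^2)) -
      (√π : ℝ) * cexp (-(π / 4 : ℝ) * I)‖) atTop (𝓝 0) := by
    rw [← tendsto_iff_norm_sub_tendsto_zero]
    exact fresnel_sym.comp Real.tendsto_sqrt_atTop
  have hb : Tendsto (fun x : ℝ => C * (√x)⁻¹ + √2 * ‖(∫ s in (-√x)..(√x), cexp (-I * (s:ℂ)^2)) -
      (√π : ℝ) * cexp (-(π / 4 : ℝ) * I)‖) atTop (𝓝 0) := by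
    have := ((tendsto_inv_atTop_zero.comp Real.tendsto_sqrt_atTop).const_mul C).add (hfr.const_mul √2)
    simpa using this
  refine squeeze_zero_norm' ?_ hb
  filter_upwards [eventually_gt_atTop 0] with x hx
  set D := ∫ φ in (-(π/2))..(π/2), cexp ((x * Real.cos φ : ℝ) * I) *
      (cexp (-(ν * φ : ℝ) * I) - (Real.cos (φ/2) : ℝ)) with hD
  set F := ∫ s in (-√x)..(√x), cexp (-I * (s:ℂ)^2) with hF
  set L : ℂ := (√π : ℝ) * cexp (-(π / 4 : ℝ) * I) with hL
  have hsplit : ∫ φ in (-(π/2))..(π/2), cexp ((x * Real.cos φ : ℝ) * I) * cexp (-(ν * φ : ℝ) * I)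
      = D + (√(2/x) : ℝ) * cexp (x * I) * F := by
    rw [hF, ← sp_ref hx, hD, ← intervalIntegral.integral_add
      (Continuous.intervalIntegrable (by fun_prop) _ _) (Continuous.intervalIntegrable (by fun_prop) _ _)]
    apply intervalIntegral.integral_congr
    intro φ _
    simp only
    ring
  have hsx : √x * √(2/x) = √2 := by
    rw [← Real.sqrt_mul hx.le]; congr 1; field_simp
  have hcos : √(2*π) * Real.cos (x - ν * π / 2 - π / 4) =
      (cexp (-(ν * π / 2 : ℝ) * I) * ((√2:ℝ) * cexp (x * I) * L)).re := by
    have : cexp (-(ν * π / 2 : ℝ) * I) * ((√2:ℝ) * cexp (x * I) * L) =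
       ((√(2*π) : ℝ):ℂ) * cexp ((x - ν * π / 2 - π / 4 : ℝ) * I) := by
      rw [hL, Real.sqrt_mul (by norm_num)]
      have : cexp ((x - ν * π / 2 - π / 4 : ℝ) * I) = cexp (-(ν * π / 2 : ℝ) * I) * cexp (x * I) *
         cexp (-(π / 4 : ℝ) * I) := by
        rw [← Complex.exp_add, ← Complex.exp_add]; congr 1; push_cast; ring
      rw [this]; push_cast; ring
    rw [this, Complex.re_ofReal_mul, Complex.exp_ofReal_mul_I_re]
  rw [sp_shift, hsplit, hcos, ← Complex.re_ofReal_mul, ← Complex.sub_re]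
  have e : ((√x : ℝ):ℂ) * (cexp (-(ν * π / 2 : ℝ) * I) * (D + (√(2/x) : ℝ) * cexp (x * I) * F)) -
     (cexp (-(ν * π / 2 : ℝ) * I) * ((√2:ℝ) * cexp (x * I) * L)) =
     cexp ((-(ν * π / 2) : ℝ) * I) * ((√x : ℝ) * D + (√2 : ℝ) * cexp (x * I) * (F - L)) := by
    rw [← hsx]; push_cast; ring
  rw [e]
  refine (Complex.abs_re_le_norm _).trans ?_
  rw [norm_mul, sp_norm, one_mul]
  refine (norm_add_le _ _).trans ?_
  refine add_le_add ?_ ?_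
  · rw [norm_mul, Complex.norm_real, Real.norm_of_nonneg (Real.sqrt_nonneg _)]
    have h1 := mul_le_mul_of_nonneg_left (hC x hx) (Real.sqrt_nonneg x)
    refine h1.trans (le_of_eq ?_)
    have : √x ≠ 0 := (Real.sqrt_pos.2 hx).ne'
    field_simp
    rw [Real.sq_sqrt hx.le]
    ring
  · rw [norm_mul, norm_mul, sp_norm, Complex.norm_real, Real.norm_of_nonneg (Real.sqrt_nonneg _), mul_one]

end StatPhase

section BesselRel
open Filter Topology

noncomputable def bA (ν x : ℝ) : ℝ := ∫ θ in (0:ℝ)..π, Real.cos (x * Real.sin θ - ν * θ)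
noncomputable def bB (ν x : ℝ) : ℝ := ∫ t in Set.Ioi (0:ℝ), Real.exp (-x * Real.sinh t - ν * t)

lemma besselJ_eq (ν x : ℝ) : besselJ ν x = (1/π) * (bA ν x - Real.sin (ν * π) * bB ν x) := by
  unfold besselJ bA bB; ring

lemma bB_aux_tendsto {x : ℝ} (hx : 0 < x) (ν : ℝ) (hν : 0 ≤ ν) :
    Tendsto (fun t : ℝ => Real.exp (-x * Real.sinh t - ν * t)) atTop (𝓝 0) := by
  have h : Tendsto (fun t : ℝ => Real.exp (-(x * t))) atTop (𝓝 0) :=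
    Real.tendsto_exp_neg_atTop_nhds_zero.comp (tendsto_id.const_mul_atTop hx)
  refine squeeze_zero' (Eventually.of_forall fun _ => (Real.exp_pos _).le) ?_ h
  filter_upwards [eventually_ge_atTop 0] with t ht
  apply Real.exp_le_exp.2
  have := Real.self_le_sinh_iff.2 ht
  nlinarith [mul_nonneg hν ht]

lemma bB_hasDeriv (x ν t : ℝ) : HasDerivAt (fun t : ℝ => - Real.exp (-x * Real.sinh t - ν * t))
    ((x * Real.cosh t + ν) * Real.exp (-x * Real.sinh t - ν * t)) t := by
  have h1 : HasDerivAt (fun t : ℝ => -x * Real.sinh t - ν * t) (-x * Real.cosh t - ν * 1) t :=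
    ((Real.hasDerivAt_sinh t).const_mul (-x)).sub ((hasDerivAt_id t).const_mul ν)
  refine h1.exp.neg.congr_deriv ?_
  ring

lemma bB_full_int {x ν : ℝ} (hx : 0 < x) (hν : 0 ≤ ν) :
    IntegrableOn (fun t : ℝ => (x * Real.cosh t + ν) * Real.exp (-x * Real.sinh t - ν * t)) (Ioi 0) := by
  refine integrableOn_Ioi_deriv_of_nonneg' (l := -0) (fun t _ => bB_hasDeriv x ν t) ?_
    (bB_aux_tendsto hx ν hν).neg
  intro t _
  have := Real.cosh_pos t
  positivity

lemma bB_full {x ν : ℝ} (hx : 0 < x) (hν : 0 ≤ ν) :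
    ∫ t in Ioi (0:ℝ), (x * Real.cosh t + ν) * Real.exp (-x * Real.sinh t - ν * t) = 1 := by
  rw [integral_Ioi_of_hasDerivAt_of_tendsto' (fun t _ => bB_hasDeriv x ν t) (bB_full_int hx hν)
    (bB_aux_tendsto hx ν hν).neg]
  simp

lemma bB_dom {x : ℝ} (hx : 0 < x) :
    IntegrableOn (fun t : ℝ => Real.cosh t * Real.exp (-x * Real.sinh t)) (Ioi 0) := by
  have h := (bB_full_int hx le_rfl).const_mul (1/x)
  refine h.congr (Eventually.of_forall fun t => ?_)
  simp only
  field_simp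
  simp

/-- generic integrability -/
lemma bB_int_of {x ν : ℝ} (hx : 0 < x) (hν : 0 ≤ ν) {f : ℝ → ℝ} (hf : Continuous f)
    (hb : ∀ t, 0 < t → |f t| ≤ Real.cosh t) :
    IntegrableOn (fun t : ℝ => f t * Real.exp (-x * Real.sinh t - ν * t)) (Ioi 0) := by
  refine Integrable.mono' (bB_dom hx) (Continuous.aestronglyMeasurable (by fun_prop)) ?_
  rw [ae_restrict_iff' measurableSet_Ioi]
  refine Eventually.of_forall fun t ht => ?_
  have ht : 0 < t := ht
  rw [norm_mul, Real.norm_eq_abs, Real.norm_of_nonneg (Real.exp_pos _).le]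
  have h0 := Real.cosh_pos t
  gcongr
  · exact hb t ht
  · nlinarith [mul_nonneg hν ht.le]

lemma sinh_bd {t : ℝ} (ht : 0 < t) : |Real.sinh t| ≤ Real.cosh t := by
  rw [abs_of_nonneg (Real.sinh_nonneg_iff.2 ht.le)]
  exact (Real.sinh_lt_cosh t).le

lemma bB_int1 {x ν : ℝ} (hx : 0 < x) (hν : 0 ≤ ν) :
    IntegrableOn (fun t : ℝ => Real.exp (-x * Real.sinh t - ν * t)) (Ioi 0) := by
  simpa using bB_int_of hx hν (f := fun _ => 1) (by fun_prop)
      (fun t _ => by simpa using Real.one_le_cosh t)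

lemma bB_hasDerivAt {x ν : ℝ} (hx : 0 < x) (hν : 0 ≤ ν) :
    HasDerivAt (bB ν) (∫ t in Ioi (0:ℝ), -Real.sinh t * Real.exp (-x * Real.sinh t - ν * t)) x := by
  have hx2 : 0 < x/2 := by linarith
  refine (hasDerivAt_integral_of_dominated_loc_of_deriv_le (μ := volume.restrict (Ioi (0:ℝ)))
    (F := fun x t => Real.exp (-x * Real.sinh t - ν * t))
    (F' := fun x t => -Real.sinh t * Real.exp (-x * Real.sinh t - ν * t))
    (bound := fun t : ℝ => Real.cosh t * Real.exp (-(x/2) * Real.sinh t))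
    (Ioi_mem_nhds (show x/2 < x by linarith)) ?_ ?_ ?_ ?_ (bB_dom hx2) ?_).2
  · exact Eventually.of_forall fun y => Continuous.aestronglyMeasurable (by fun_prop)
  · exact bB_int1 hx hν
  · exact Continuous.aestronglyMeasurable (by fun_prop)
  · rw [ae_restrict_iff' measurableSet_Ioi]
    refine Eventually.of_forall fun t ht y hy => ?_
    have ht : 0 < t := ht
    have hy : x/2 < y := hy
    rw [norm_mul, Real.norm_eq_abs, abs_neg, Real.norm_of_nonneg (Real.exp_pos _).le]
    have h0 := Real.cosh_pos t
    have h1 := Real.sinh_nonneg_iff.2 ht.le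
    gcongr
    · exact sinh_bd ht
    · nlinarith [mul_nonneg hν ht.le]
  · refine Eventually.of_forall fun t y _ => ?_
    have h1 : HasDerivAt (fun y : ℝ => -y * Real.sinh t - ν * t) (-1 * Real.sinh t) y :=
      (((hasDerivAt_id y).neg).mul_const _).sub_const _
    refine h1.exp.congr_deriv ?_
    ring

lemma bA_hasDerivAt (ν x : ℝ) :
    HasDerivAt (bA ν) (∫ θ in (0:ℝ)..π, -Real.sin (x * Real.sin θ - ν * θ) * Real.sin θ) x := by
  refine (intervalIntegral.hasDerivAt_integral_of_dominated_loc_of_deriv_le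
    (F := fun x θ => Real.cos (x * Real.sin θ - ν * θ))
    (F' := fun x θ => -Real.sin (x * Real.sin θ - ν * θ) * Real.sin θ)
    (bound := fun _ => 1) (s := univ) univ_mem ?_ ?_ ?_ ?_ ?_ ?_).2
  · exact Eventually.of_forall fun y => Continuous.aestronglyMeasurable (by fun_prop)
  · exact Continuous.intervalIntegrable (by fun_prop) _ _
  · exact Continuous.aestronglyMeasurable (by fun_prop)
  · refine Eventually.of_forall fun θ _ y _ => ?_
    rw [norm_mul, norm_neg]
    exact mul_le_one₀ (Real.abs_sin_le_one _) (norm_nonneg _) (Real.abs_sin_le_one _)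
  · exact Continuous.intervalIntegrable (by fun_prop) _ _
  · refine Eventually.of_forall fun θ _ y _ => ?_
    have h1 : HasDerivAt (fun y : ℝ => y * Real.sin θ - ν * θ) (1 * Real.sin θ) y :=
      ((hasDerivAt_id y).mul_const _).sub_const _
    refine h1.cos.congr_deriv ?_
    ring

lemma bA_full (ν x : ℝ) :
    ∫ θ in (0:ℝ)..π, (x * Real.cos θ - ν) * Real.cos (x * Real.sin θ - ν * θ) = - Real.sin (ν * π) := by
  have hd : ∀ θ ∈ uIcc (0:ℝ) π, HasDerivAt (fun θ : ℝ => Real.sin (x * Real.sin θ - ν * θ))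
      ((x * Real.cos θ - ν) * Real.cos (x * Real.sin θ - ν * θ)) θ := by
    intro θ _
    have h1 : HasDerivAt (fun θ : ℝ => x * Real.sin θ - ν * θ) (x * Real.cos θ - ν * 1) θ :=
      ((Real.hasDerivAt_sin θ).const_mul x).sub ((hasDerivAt_id θ).const_mul ν)
    refine h1.sin.congr_deriv ?_
    ring
  rw [intervalIntegral.integral_eq_sub_of_hasDerivAt hd (Continuous.intervalIntegrable (by fun_prop) _ _)]
  simp

lemma bA_rel1 (ν x : ℝ) :
    x * (∫ θ in (0:ℝ)..π, -Real.sin (x * Real.sin θ - ν * θ) * Real.sin θ) =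
      ν * bA ν x - x * bA (ν+1) x - Real.sin (ν * π) := by
  have h := bA_full ν x
  unfold bA
  rw [sub_eq_add_neg _ (Real.sin _), ← h]
  simp only [← intervalIntegral.integral_const_mul]
  rw [← intervalIntegral.integral_sub (Continuous.intervalIntegrable (by fun_prop) _ _)
    (Continuous.intervalIntegrable (by fun_prop) _ _), ← intervalIntegral.integral_add
    (Continuous.intervalIntegrable (by fun_prop) _ _) (Continuous.intervalIntegrable (by fun_prop) _ _)]
  apply intervalIntegral.integral_congr
  intro θ _
  simp only
  rw [show x * Real.sin θ - (ν+1) * θ = (x * Real.sin θ - ν * θ) - θ by ring, Real.cos_sub (x * Real.sin θ - ν * θ) θ]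
  ring

lemma bA_rel2 (ν x : ℝ) :
    x * (∫ θ in (0:ℝ)..π, -Real.sin (x * Real.sin θ - (ν+1) * θ) * Real.sin θ) =
      x * bA ν x - (ν+1) * bA (ν+1) x + Real.sin ((ν+1) * π) := by
  have h := bA_full (ν+1) x
  unfold bA
  rw [← neg_neg (Real.sin ((ν+1)*π)), ← h, ← sub_eq_add_neg]
  simp only [← intervalIntegral.integral_const_mul]
  rw [← intervalIntegral.integral_sub (Continuous.intervalIntegrable (by fun_prop) _ _)
    (Continuous.intervalIntegrable (by fun_prop) _ _), ← intervalIntegral.integral_sub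
    (Continuous.intervalIntegrable (by fun_prop) _ _) (Continuous.intervalIntegrable (by fun_prop) _ _)]
  apply intervalIntegral.integral_congr
  intro θ _
  simp only
  rw [show x * Real.sin θ - ν * θ = (x * Real.sin θ - (ν+1) * θ) + θ by ring, Real.cos_add (x * Real.sin θ - (ν+1) * θ) θ]
  ring

lemma bB_ints {x ν : ℝ} (hx : 0 < x) (hν : 0 ≤ ν) :
    IntegrableOn (fun t : ℝ => -Real.sinh t * Real.exp (-x * Real.sinh t - ν * t)) (Ioi 0) :=
  bB_int_of hx hν (f := fun t => -Real.sinh t) (by fun_prop) (fun t ht => by rw [abs_neg]; exact sinh_bd ht)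

lemma bB_rel1 {x ν : ℝ} (hx : 0 < x) (hν : 0 ≤ ν) :
    x * (∫ t in Ioi (0:ℝ), -Real.sinh t * Real.exp (-x * Real.sinh t - ν * t)) =
      ν * bB ν x + x * bB (ν+1) x - 1 := by
  have h := bB_full hx hν
  have i1 := (bB_int1 hx hν).const_mul ν
  have i2 := (bB_int1 hx (show 0 ≤ ν + 1 by linarith)).const_mul x
  have i3 := (bB_ints hx hν).const_mul x
  have h2 : ∫ t in Ioi (0:ℝ), (x * Real.cosh t + ν) * Real.exp (-x * Real.sinh t - ν * t) =
      ∫ t in Ioi (0:ℝ), (ν * Real.exp (-x * Real.sinh t - ν * t) +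
        x * Real.exp (-x * Real.sinh t - (ν+1) * t)) -
        x * (-Real.sinh t * Real.exp (-x * Real.sinh t - ν * t)) := by
    congr 1
    ext t
    rw [show -x * Real.sinh t - (ν+1) * t = (-x * Real.sinh t - ν * t) + -t by ring, Real.exp_add,
      ← Real.cosh_sub_sinh]
    ring
  have h3 := integral_sub (i1.add i2) i3
  have h4 := integral_add i1 i2
  simp only [Pi.add_apply] at h3
  rw [h2, h3, h4, integral_const_mul, integral_const_mul, integral_const_mul] at h
  unfold bB
  linarith

lemma bB_rel2 {x ν : ℝ} (hx : 0 < x) (hν : 0 ≤ ν) :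
    x * (∫ t in Ioi (0:ℝ), -Real.sinh t * Real.exp (-x * Real.sinh t - (ν+1) * t)) =
      1 - x * bB ν x - (ν+1) * bB (ν+1) x := by
  have hν1 : 0 ≤ ν + 1 := by linarith
  have h := bB_full hx hν1
  have i1 := (bB_int1 hx hν1).const_mul (ν+1)
  have i2 := (bB_int1 hx hν).const_mul x
  have i3 := (bB_ints hx hν1).const_mul x
  have h2 : ∫ t in Ioi (0:ℝ), (x * Real.cosh t + (ν+1)) * Real.exp (-x * Real.sinh t - (ν+1) * t) =
      ∫ t in Ioi (0:ℝ), ((ν+1) * Real.exp (-x * Real.sinh t - (ν+1) * t) +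
        x * Real.exp (-x * Real.sinh t - ν * t)) +
        x * (-Real.sinh t * Real.exp (-x * Real.sinh t - (ν+1) * t)) := by
    congr 1
    ext t
    rw [show -x * Real.sinh t - ν * t = (-x * Real.sinh t - (ν+1) * t) + t by ring, Real.exp_add,
      ← Real.cosh_add_sinh t]
    ring
  have h3 := integral_add (i1.add i2) i3
  have h4 := integral_add i1 i2
  simp only [Pi.add_apply] at h3
  rw [h2, h3, h4, integral_const_mul, integral_const_mul, integral_const_mul] at h
  unfold bB
  linarith

lemma besselJ_deriv {ν x : ℝ} (hν : 0 ≤ ν) (hx : 0 < x) :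
    HasDerivAt (besselJ ν) (ν / x * besselJ ν x - besselJ (ν+1) x) x := by
  have h : HasDerivAt (fun x => (1/π) * (bA ν x - Real.sin (ν * π) * bB ν x)) _ x :=
    ((bA_hasDerivAt ν x).sub ((bB_hasDerivAt hx hν).const_mul _)).const_mul (1/π)
  have e : besselJ ν = fun x => (1/π) * (bA ν x - Real.sin (ν * π) * bB ν x) := by
    ext x; exact besselJ_eq ν x
  rw [e]
  refine h.congr_deriv ?_
  rw [besselJ_eq]
  have hs : Real.sin ((ν+1) * π) = - Real.sin (ν * π) := by
    rw [add_mul, one_mul, Real.sin_add_pi]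
  have h1 := bA_rel1 ν x
  have h2 := bB_rel1 hx hν
  rw [hs]
  simp only
  set X := ∫ θ in (0:ℝ)..π, -Real.sin (x * Real.sin θ - ν * θ) * Real.sin θ
  set Y := ∫ t in Ioi (0:ℝ), -Real.sinh t * Real.exp (-x * Real.sinh t - ν * t)
  have hX : X = (ν * bA ν x - x * bA (ν+1) x - Real.sin (ν * π)) / x := by
    rw [← h1]; field_simp
  have hY : Y = (ν * bB ν x + x * bB (ν+1) x - 1) / x := by
    rw [← h2]; field_simp
  rw [hX, hY]
  field_simp
  ring

lemma besselJ_deriv' {ν x : ℝ} (hν : 0 ≤ ν) (hx : 0 < x) :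
    HasDerivAt (besselJ (ν+1)) (besselJ ν x - (ν+1) / x * besselJ (ν+1) x) x := by
  have hν1 : 0 ≤ ν + 1 := by linarith
  have h : HasDerivAt (fun x => (1/π) * (bA (ν+1) x - Real.sin ((ν+1) * π) * bB (ν+1) x)) _ x :=
    ((bA_hasDerivAt (ν+1) x).sub ((bB_hasDerivAt hx hν1).const_mul _)).const_mul (1/π)
  have e : besselJ (ν+1) = fun x => (1/π) * (bA (ν+1) x - Real.sin ((ν+1) * π) * bB (ν+1) x) := by
    ext x; exact besselJ_eq (ν+1) x
  rw [e]
  refine h.congr_deriv ?_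
  rw [besselJ_eq]
  have hs : Real.sin (ν * π) = - Real.sin ((ν+1) * π) := by
    rw [add_mul, one_mul, Real.sin_add_pi, neg_neg]
  have h1 := bA_rel2 ν x
  have h2 := bB_rel2 hx hν
  rw [hs]
  simp only
  set X := ∫ θ in (0:ℝ)..π, -Real.sin (x * Real.sin θ - (ν+1) * θ) * Real.sin θ
  set Y := ∫ t in Ioi (0:ℝ), -Real.sinh t * Real.exp (-x * Real.sinh t - (ν+1) * t)
  have hX : X = (x * bA ν x - (ν+1) * bA (ν+1) x + Real.sin ((ν+1) * π)) / x := by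
    rw [← h1]; field_simp
  have hY : Y = (1 - x * bB ν x - (ν+1) * bB (ν+1) x) / x := by
    rw [← h2]; field_simp
  rw [hX, hY]
  field_simp
  ring

lemma besselJ_zero {ν : ℝ} (hν : 0 < ν) : besselJ ν 0 = 0 := by
  rw [besselJ_eq]
  have h1 : bA ν 0 = Real.sin (ν * π) / ν := by
    have := bA_full ν 0
    simp only [zero_mul, zero_sub, Real.cos_neg] at this
    rw [intervalIntegral.integral_const_mul] at this
    unfold bA
    simp only [zero_mul, zero_sub, Real.cos_neg]
    field_simp
    linarith
  have h2 : bB ν 0 = 1 / ν := by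
    unfold bB
    have := integral_exp_mul_Ioi (a := -ν) (by linarith) 0
    simp only [neg_zero, zero_mul, zero_sub]
    simp only [neg_mul] at this
    rw [this]; simp
  rw [h1, h2]
  ring

lemma besselJ_cont {ν : ℝ} (hν : 0 < ν) : ContinuousOn (besselJ ν) (Ici 0) := by
  have e : besselJ ν = fun x => (1/π) * (bA ν x - Real.sin (ν * π) * bB ν x) := by
    ext x; exact besselJ_eq ν x
  rw [e]
  have hA : Continuous (bA ν) :=
    continuous_iff_continuousAt.2 fun x => (bA_hasDerivAt ν x).continuousAt
  have hB : ContinuousOn (bB ν) (Ici 0) := by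
    refine continuousOn_of_dominated (bound := fun t => Real.exp (-ν * t)) ?_ ?_ ?_ ?_
    · exact fun y _ => Continuous.aestronglyMeasurable (by fun_prop)
    · intro y hy
      have hy : 0 ≤ y := hy
      rw [ae_restrict_iff' measurableSet_Ioi]
      refine Eventually.of_forall fun t ht => ?_
      have ht : 0 < t := ht
      rw [Real.norm_of_nonneg (Real.exp_pos _).le]
      apply Real.exp_le_exp.2
      nlinarith [mul_nonneg hy (Real.sinh_nonneg_iff.2 ht.le)]
    · exact integrableOn_exp_mul_Ioi (by linarith) 0
    · exact Eventually.of_forall fun t => Continuous.continuousOn (by fun_prop)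
  exact continuousOn_const.mul (hA.continuousOn.sub (continuousOn_const.mul hB))

lemma bB_le {x ν : ℝ} (hx : 0 < x) (hν : 0 ≤ ν) : |bB ν x| ≤ 1 / x := by
  have h1 : bB ν x ≤ (1/x) * ∫ t in Ioi (0:ℝ), (x * Real.cosh t + ν) * Real.exp (-x * Real.sinh t - ν * t) := by
    unfold bB
    rw [← integral_const_mul]
    refine setIntegral_mono_on (bB_int1 hx hν) ((bB_full_int hx hν).const_mul _) measurableSet_Ioi ?_
    intro t ht
    rw [← mul_assoc]
    refine le_mul_of_one_le_left (Real.exp_pos _).le ?_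
    rw [mul_add, ← mul_assoc, one_div_mul_cancel hx.ne', one_mul]
    have := Real.one_le_cosh t
    have : 0 ≤ 1 / x * ν := by positivity
    linarith
  have h0 : 0 ≤ bB ν x := integral_nonneg fun t => (Real.exp_pos _).le
  rw [bB_full hx hν] at h1
  rw [abs_of_nonneg h0]
  linarith

lemma besselJ_bd {x ν : ℝ} (hx : 1 ≤ x) (hν : 0 ≤ ν) : |besselJ ν x| ≤ 2 := by
  rw [besselJ_eq]
  have hA : |bA ν x| ≤ π := by
    have := intervalIntegral.norm_integral_le_of_norm_le_const (a := 0) (b := π) (C := 1)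
      (f := fun θ => Real.cos (x * Real.sin θ - ν * θ)) (fun θ _ => Real.abs_cos_le_one _)
    simpa [bA, abs_of_pos Real.pi_pos] using this
  have hB : |bB ν x| ≤ 1 := (bB_le (by linarith) hν).trans (by
    rw [div_le_one (by linarith)]; exact hx)
  have hS : |Real.sin (ν * π) * bB ν x| ≤ 1 := by
    rw [abs_mul]; exact mul_le_one₀ (Real.abs_sin_le_one _) (abs_nonneg _) hB
  have h3 := Real.pi_gt_three
  rw [abs_mul, abs_of_pos (by positivity : 0 < 1/π)]
  have : |bA ν x - Real.sin (ν * π) * bB ν x| ≤ π + 1 := (abs_sub _ _).trans (by linarith)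
  rw [one_div_mul_eq_div, div_le_iff₀ (by linarith)]
  linarith

/-- leading asymptotics for fixed order -/
lemma besselJ_lim {ν : ℝ} (hν : 0 ≤ ν) : Tendsto (fun x : ℝ => √x * besselJ ν x -
    √(2/π) * Real.cos (x - ν * π / 2 - π / 4)) atTop (𝓝 0) := by
  have h1 := (statphase ν).const_mul (1/π)
  have h2 : Tendsto (fun x : ℝ => (Real.sin (ν * π) / π) * (√x * bB ν x)) atTop (𝓝 0) := by
    have h3 : Tendsto (fun x : ℝ => √x * bB ν x) atTop (𝓝 0) := by
      refine squeeze_zero_norm' ?_ (tendsto_inv_atTop_zero.comp Real.tendsto_sqrt_atTop)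
      filter_upwards [eventually_gt_atTop 0] with x hx
      rw [norm_mul, Real.norm_of_nonneg (Real.sqrt_nonneg _)]
      refine (mul_le_mul_of_nonneg_left (bB_le hx hν) (Real.sqrt_nonneg _)).trans (le_of_eq ?_)
      have : √x ≠ 0 := (Real.sqrt_pos.2 hx).ne'
      simp only [Function.comp]
      field_simp
      rw [Real.sq_sqrt hx.le]
    simpa using h3.const_mul (Real.sin (ν * π) / π)
  have h4 := h1.sub h2
  simp only [mul_zero, sub_zero] at h4
  refine h4.congr fun x => ?_
  rw [besselJ_eq]
  have : √(2/π) = √(2*π) / π := by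
    rw [show 2/π = (2*π)/π^2 by field_simp, Real.sqrt_div (by positivity), Real.sqrt_sq Real.pi_pos.le]
  rw [this]
  unfold bA
  ring

end BesselRel

section BesselODE
open Filter Topology

noncomputable def uu (ν x : ℝ) : ℝ := √x * besselJ ν x
noncomputable def vv (ν x : ℝ) : ℝ := (ν+1/2)/x * uu ν x - √x * besselJ (ν+1) x

lemma uu_deriv {ν x : ℝ} (hν : 0 ≤ ν) (hx : 0 < x) : HasDerivAt (uu ν) (vv ν x) x := by
  have h := (Real.hasDerivAt_sqrt hx.ne').mul (besselJ_deriv hν hx)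
  refine h.congr_deriv ?_
  have hs : √x ≠ 0 := (Real.sqrt_pos.2 hx).ne'
  have hq : √x * √x = x := Real.mul_self_sqrt hx.le
  have e : 1 / (2 * √x) = √x / (2 * x) := by
    rw [div_eq_div_iff (by positivity) (by positivity)]; linear_combination (-2) * hq
  rw [e]
  unfold vv uu
  field_simp
  ring

lemma vv_deriv {ν x : ℝ} (hν : 0 ≤ ν) (hx : 0 < x) :
    HasDerivAt (vv ν) (-(uu ν x) + (ν^2-1/4)/x^2 * uu ν x) x := by
  have h1 := ((hasDerivAt_const x (ν+1/2)).div (hasDerivAt_id x) hx.ne').mul (uu_deriv hν hx)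
  have h2 := (Real.hasDerivAt_sqrt hx.ne').mul (besselJ_deriv' hν hx)
  refine (h1.sub h2).congr_deriv ?_
  have hs : √x ≠ 0 := (Real.sqrt_pos.2 hx).ne'
  have hq : √x * √x = x := Real.mul_self_sqrt hx.le
  have e : 1 / (2 * √x) = √x / (2 * x) := by
    rw [div_eq_div_iff (by positivity) (by positivity)]; linear_combination (-2) * hq
  rw [e]
  simp only [Pi.div_apply, id]
  unfold vv uu
  field_simp
  ring

lemma ee_antitone {ν : ℝ} (hν : 0 ≤ ν) :
    AntitoneOn (fun x => (uu ν x^2 + vv ν x^2) * Real.exp (|ν^2-1/4|/x)) (Ioi 0) := by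
  set l := |ν^2-1/4| with hl
  have hd : ∀ x ∈ Ioi (0:ℝ), HasDerivAt (fun x => (uu ν x^2 + vv ν x^2) * Real.exp (l/x))
      ((2 * (ν^2-1/4)/x^2 * (uu ν x * vv ν x) - l / x^2 * (uu ν x^2 + vv ν x^2)) * Real.exp (l/x)) x := by
    intro x hx
    have hx : 0 < x := hx
    have h1 := ((uu_deriv hν hx).pow 2).add ((vv_deriv hν hx).pow 2)
    have h2 := (((hasDerivAt_const x l).div (hasDerivAt_id x) hx.ne')).exp
    refine (h1.mul h2).congr_deriv ?_
    simp only [Pi.div_apply, id, Pi.add_apply, Pi.pow_apply]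
    field_simp
    ring
  refine antitoneOn_of_deriv_nonpos (convex_Ioi 0) (fun x hx => (hd x hx).continuousAt.continuousWithinAt) ?_ ?_
  · intro x hx; rw [interior_Ioi] at hx; exact (hd x hx).differentiableAt.differentiableWithinAt
  · intro x hx
    rw [interior_Ioi] at hx
    rw [(hd x hx).deriv]
    have hx : 0 < x := hx
    refine mul_nonpos_of_nonpos_of_nonneg ?_ (Real.exp_pos _).le
    have : 2 * (ν^2-1/4) * (uu ν x * vv ν x) ≤ l * (uu ν x^2 + vv ν x^2) := by
      have h1 : 2 * (ν^2-1/4) * (uu ν x * vv ν x) ≤ l * |2 * (uu ν x * vv ν x)| := by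
        rw [hl, ← abs_mul]; refine le_trans (le_of_eq (by ring)) (le_abs_self _)
      refine h1.trans (mul_le_mul_of_nonneg_left ?_ (abs_nonneg _))
      rw [abs_le]; constructor <;> nlinarith [sq_nonneg (uu ν x + vv ν x), sq_nonneg (uu ν x - vv ν x)]
    have e : 2 * (ν^2-1/4)/x^2 * (uu ν x * vv ν x) - l / x^2 * (uu ν x^2 + vv ν x^2) =
      (2 * (ν^2-1/4) * (uu ν x * vv ν x) - l * (uu ν x^2 + vv ν x^2)) / x^2 := by ring
    rw [e]
    exact div_nonpos_of_nonpos_of_nonneg (by linarith) (by positivity)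

lemma uu_bound (N : ℝ) (hN : 0 < N) : ∃ M : ℝ, 0 < M ∧ ∀ ν, 0 ≤ ν → ν ≤ N → ∀ x, 1 ≤ x → |uu ν x| ≤ M := by
  refine ⟨(4 + (2*(N+1/2)+2)^2) * Real.exp (N^2+1) + 1, by positivity, fun ν hν hνN x hx => ?_⟩
  have h := ee_antitone hν (show (1:ℝ) ∈ Ioi 0 by simp) (show x ∈ Ioi (0:ℝ) from by
    show 0 < x; linarith) hx
  simp only [div_one] at h
  have a1 := besselJ_bd (le_refl 1) hν
  have a2 := besselJ_bd (le_refl 1) (show 0 ≤ ν+1 by linarith)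
  have hu : uu ν 1 = besselJ ν 1 := by simp [uu]
  have hv : |vv ν 1| ≤ 2*(N+1/2)+2 := by
    have : vv ν 1 = (ν+1/2) * besselJ ν 1 - besselJ (ν+1) 1 := by simp [vv, uu]
    rw [this]
    refine (abs_sub _ _).trans ?_
    rw [abs_mul, abs_of_nonneg (by linarith : 0 ≤ ν+1/2)]
    nlinarith [abs_nonneg (besselJ ν 1)]
  have hE1 : uu ν 1^2 + vv ν 1^2 ≤ 4 + (2*(N+1/2)+2)^2 := by
    rw [hu, ← sq_abs, ← sq_abs (vv ν 1)]
    have : |besselJ ν 1|^2 ≤ 2^2 := by gcongr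
    have : |vv ν 1|^2 ≤ (2*(N+1/2)+2)^2 := by gcongr
    linarith
  have hl : |ν^2-1/4| ≤ N^2+1 := by rw [abs_le]; constructor <;> nlinarith
  have h1 : Real.exp (|ν^2-1/4|/x) ≥ 1 := Real.one_le_exp (by positivity)
  have h2 : Real.exp (|ν^2-1/4|) ≤ Real.exp (N^2+1) := Real.exp_le_exp.2 hl
  have h3 : uu ν x^2 ≤ (4 + (2*(N+1/2)+2)^2) * Real.exp (N^2+1) := by
    have : (uu ν 1^2 + vv ν 1^2) * Real.exp |ν^2-1/4| ≤ (4 + (2*(N+1/2)+2)^2) * Real.exp (N^2+1) := by gcongr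
    nlinarith [sq_nonneg (uu ν x), sq_nonneg (vv ν x)]
  rw [← sq_abs] at h3
  nlinarith [abs_nonneg (uu ν x)]

/-- comparison with the leading asymptotics -/
lemma uu_approx {ν x D : ℝ} (hν : 0 ≤ ν) (hx : 0 < x) (hD0 : 0 ≤ D) (hD : ∀ y, x ≤ y → |(ν^2-1/4) * uu ν y| ≤ D) :
    |uu ν x - √(2/π) * Real.cos (x - ν * π / 2 - π / 4)| ≤ D / x := by
  set w : ℝ → ℝ := fun y => uu ν y * Real.cos (y - x) - vv ν y * Real.sin (y - x) with hw
  have hdw : ∀ y, x ≤ y → HasDerivAt w (-((ν^2-1/4)/y^2 * uu ν y * Real.sin (y - x))) y := by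
    intro y hy
    have hy0 : 0 < y := by linarith
    have hc : HasDerivAt (fun y => Real.cos (y - x)) (-Real.sin (y-x) * 1) y := ((hasDerivAt_id y).sub_const x).cos
    have hs : HasDerivAt (fun y => Real.sin (y - x)) (Real.cos (y-x) * 1) y := ((hasDerivAt_id y).sub_const x).sin
    refine (((uu_deriv hν hy0).mul hc).sub ((vv_deriv hν hy0).mul hs)).congr_deriv ?_
    ring
  -- w y - w x bounded by D (1/x - 1/y)
  have key : ∀ z, x ≤ z → |w z - w x| ≤ D / x := by
    intro z hz
    have hB : ∀ y, x ≤ y → HasDerivAt (fun y => D * (1/x - 1/y)) (D / y^2) y := by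
      intro y hy
      have hy0 : y ≠ 0 := by linarith
      have := (((hasDerivAt_inv hy0).const_sub (1/x)).const_mul D)
      simp only [one_div] at this ⊢
      refine this.congr_deriv ?_
      ring
    have h := image_norm_le_of_norm_deriv_right_le_deriv_boundary' (f := fun y => w y - w x) (a := x) (b := z)
      (f' := fun y => -((ν^2-1/4)/y^2 * uu ν y * Real.sin (y - x)))
      (B := fun y => D * (1/x - 1/y)) (B' := fun y => D / y^2)
      (fun y hy => ((hdw y hy.1).sub_const _).continuousAt.continuousWithinAt)
      (fun y hy => ((hdw y hy.1).sub_const _).hasDerivWithinAt) (by simp)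
      (fun y hy => (hB y hy.1).continuousAt.continuousWithinAt)
      (fun y hy => (hB y hy.1).hasDerivWithinAt)
      (fun y hy => by
        have h1 := hD y hy.1
        have hy0 : 0 < y := by linarith [hy.1]
        have e : -((ν^2-1/4)/y^2 * uu ν y * Real.sin (y - x)) = -(((ν^2-1/4) * uu ν y) * Real.sin (y - x)) / y^2 := by ring
        rw [e, Real.norm_eq_abs, abs_div, abs_neg, abs_mul, abs_of_pos (by positivity : 0 < y^2)]
        gcongr
        calc _ ≤ D * 1 := mul_le_mul h1 (Real.abs_sin_le_one _) (abs_nonneg _) hD0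
          _ = D := mul_one D) (x := z) ⟨hz, le_rfl⟩
    refine h.trans ?_
    have : 0 ≤ 1/z := by have : 0 < z := by linarith
                         positivity
    rw [div_eq_mul_one_div D x]
    exact mul_le_mul_of_nonneg_left (by linarith) hD0
  have hlim := besselJ_lim hν
  have hseq : Tendsto (fun n : ℕ => x + n * (2*π)) atTop atTop := by
    refine tendsto_atTop_add_const_left _ _ ?_
    exact Tendsto.atTop_mul_const (by positivity) tendsto_natCast_atTop_atTop
  have h2 := hlim.comp hseq
  have h3 : Tendsto (fun n : ℕ => uu ν (x + n * (2*π)) - uu ν x) atTop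
      (𝓝 (√(2/π) * Real.cos (x - ν * π / 2 - π / 4) - uu ν x)) := by
    have h4 := h2.add_const (√(2/π) * Real.cos (x - ν * π / 2 - π / 4) - uu ν x)
    rw [zero_add] at h4
    refine h4.congr fun n => ?_
    simp only [Function.comp, uu]
    have : Real.cos (x + n * (2*π) - ν * π / 2 - π / 4) = Real.cos (x - ν * π / 2 - π / 4) := by
      rw [show x + n * (2*π) - ν * π / 2 - π / 4 = (x - ν * π / 2 - π / 4) + n * (2*π) by ring]
      exact Real.cos_add_nat_mul_two_pi _ n
    rw [this]; ring
  rw [abs_sub_comm]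
  refine le_of_tendsto h3.abs (Eventually.of_forall fun n => ?_)
  have hn : x ≤ x + n * (2*π) := by have := Real.pi_pos; have : 0 ≤ (n:ℝ) * (2*π) := by positivity
                                    linarith
  have := key _ hn
  have e1 : w (x + n * (2*π)) = uu ν (x + n * (2*π)) := by
    simp only [hw, add_sub_cancel_left]
    rw [Real.cos_nat_mul_two_pi, show (n:ℝ) * (2*π) = ((2*n : ℕ):ℝ) * π by push_cast; ring, Real.sin_nat_mul_pi]
    ring
  have e2 : w x = uu ν x := by simp [hw]
  rw [e1, e2] at this
  exact this

lemma uu_unif (N : ℝ) (hN : 0 < N) : ∃ C : ℝ, 0 < C ∧ ∀ ν, 0 ≤ ν → ν ≤ N → ∀ x, 1 ≤ x →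
    |uu ν x - √(2/π) * Real.cos (x - ν * π / 2 - π / 4)| ≤ C / x := by
  obtain ⟨M, hM, h⟩ := uu_bound N hN
  refine ⟨(N^2+1)*M, by positivity, fun ν hν hνN x hx => uu_approx hν (by linarith) (by positivity) ?_⟩
  intro y hy
  rw [abs_mul]
  have hl : |ν^2-1/4| ≤ N^2+1 := by rw [abs_le]; constructor <;> nlinarith
  exact mul_le_mul hl (h ν hν hνN y (by linarith)) (abs_nonneg _) (by positivity)

lemma uu_half {x : ℝ} (hx : 0 < x) : uu (1/2) x = √(2/π) * Real.sin x := by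
  have h := uu_approx (ν := 1/2) (D := 0) (by norm_num) hx le_rfl (fun y _ => by norm_num)
  rw [zero_div] at h
  have := abs_nonpos_iff.1 h
  rw [sub_eq_zero.1 this, show x - 1/2 * π / 2 - π / 4 = x - π/2 by ring, Real.cos_sub_pi_div_two]

lemma half_zero {x : ℝ} (hx : 0 < x) : besselJ (1/2) x = 0 ↔ Real.sin x = 0 := by
  have h := uu_half hx
  unfold uu at h
  have h1 : √x ≠ 0 := (Real.sqrt_pos.2 hx).ne'
  have h2 : √(2/π) ≠ 0 := (Real.sqrt_pos.2 (by positivity)).ne'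
  constructor
  · intro h0; rw [h0, mul_zero] at h; exact (mul_eq_zero.1 h.symm).resolve_left h2
  · intro h0; rw [h0, mul_zero] at h; exact (mul_eq_zero.1 h).resolve_left h1

lemma no_common {ν x : ℝ} (hν : 0 ≤ ν) (hx : 0 < x) (h0 : besselJ ν x = 0) : besselJ (ν+1) x ≠ 0 := by
  intro h1
  have hu : ∀ y, x ≤ y → uu ν y = 0 := by
    intro y hy
    have h := ee_antitone hν (show x ∈ Ioi 0 from hx) (show y ∈ Ioi (0:ℝ) from lt_of_lt_of_le hx hy) hy
    have e1 : uu ν x = 0 := by simp [uu, h0]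
    have e2 : vv ν x = 0 := by simp [vv, e1, h1]
    simp only [e1, e2] at h
    have : 0 < Real.exp (|ν^2-1/4|/y) := Real.exp_pos _
    have h3 : uu ν y ^2 + vv ν y ^2 ≤ 0 := by
      by_contra hc
      push Not at hc
      have := mul_pos hc this
      norm_num at h
      linarith
    have : uu ν y ^2 = 0 := by nlinarith [sq_nonneg (uu ν y), sq_nonneg (vv ν y)]
    exact pow_eq_zero_iff (two_ne_zero) |>.1 this
  set z := x - (x - ν*π/2 - π/4) with hz
  have hlim := besselJ_lim hν
  have hseq : Tendsto (fun n : ℕ => (ν*π/2 + π/4) + n * (2*π)) atTop atTop := by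
    refine tendsto_atTop_add_const_left _ _ ?_
    exact Tendsto.atTop_mul_const (by positivity) tendsto_natCast_atTop_atTop
  have h2 := hlim.comp hseq
  have h3 : Tendsto (fun n : ℕ => - √(2/π)) atTop (𝓝 0) := by
    refine h2.congr' ?_
    filter_upwards [hseq.eventually_ge_atTop x] with n hn
    have := hu _ hn
    unfold uu at this
    simp only [Function.comp]
    rw [this, show (ν*π/2 + π/4) + n * (2*π) - ν * π / 2 - π / 4 = n * (2*π) by ring, Real.cos_nat_mul_two_pi]
    ring
  have := tendsto_nhds_unique h3 tendsto_const_nhds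
  have h2 : 0 < √(2/π) := (Real.sqrt_pos.2 (by positivity))
  linarith

end BesselODE

section BesselLoc
open Filter Topology

noncomputable def cc (ν : ℝ) (m : ℤ) : ℝ := π * (m + ν/2 - 1/4)

lemma cos_cc (ν s : ℝ) (m : ℤ) :
    Real.cos (cc ν m + s - ν * π / 2 - π / 4) = Real.cos (m * π) * Real.sin s := by
  unfold cc
  rw [show π * (m + ν/2 - 1/4) + s - ν * π / 2 - π / 4 = (m * π + s) - π/2 by ring, Real.cos_sub_pi_div_two,
    Real.sin_add, Real.sin_int_mul_pi]
  ring

lemma eps_sq (m : ℤ) : Real.cos (m * π) * Real.cos (m * π) = 1 := by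
  have := Real.sin_sq_add_cos_sq (m * π)
  rw [Real.sin_int_mul_pi] at this
  nlinarith

lemma zero_loc (N : ℝ) (hN : 0 < N) : ∃ C : ℝ, 0 < C ∧ ∀ ν, 0 ≤ ν → ν ≤ N → ∀ j, 1 ≤ j → besselJ ν j = 0 →
    ∃ m : ℤ, |j - cc ν m| ≤ C / j := by
  obtain ⟨C, hC, h⟩ := uu_unif N hN
  have hR : 0 < √(2/π) := Real.sqrt_pos.2 (by positivity)
  refine ⟨π/2 * (C / √(2/π)), by positivity, fun ν hν hνN j hj h0 => ?_⟩
  set m := round ((j - ν*π/2 + π/4)/π) with hm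
  refine ⟨m, ?_⟩
  have hs : |j - cc ν m| ≤ π/2 := by
    have h1 := abs_sub_round ((j - ν*π/2 + π/4)/π)
    have : j - cc ν m = π * ((j - ν*π/2 + π/4)/π - m) := by unfold cc; field_simp; ring
    rw [this, abs_mul, abs_of_pos Real.pi_pos]
    have := mul_le_mul_of_nonneg_left h1 Real.pi_pos.le
    linarith
  have h2 := h ν hν hνN j hj
  have e : uu ν j = 0 := by simp [uu, h0]
  have h3 := cos_cc ν (j - cc ν m) m
  rw [add_sub_cancel] at h3
  rw [e, h3, zero_sub, abs_neg, abs_mul, abs_mul, abs_of_pos hR] at h2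
  have h4 : |Real.cos (m * π)| = 1 := by
    have := eps_sq m
    rw [← abs_mul_abs_self] at this
    nlinarith [abs_nonneg (Real.cos (m * π))]
  rw [h4, one_mul] at h2
  have h5 := Real.mul_abs_le_abs_sin hs
  have h6 : √(2/π) * (2/π * |j - cc ν m|) ≤ C / j := (mul_le_mul_of_nonneg_left h5 hR.le).trans h2
  have e2 : |j - cc ν m| = π/2 / √(2/π) * (√(2/π) * (2/π * |j - cc ν m|)) := by
    field_simp
  rw [e2]
  calc _ ≤ π/2 / √(2/π) * (C / j) := by gcongr
    _ = _ := by field_simp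

lemma zero_exist (N : ℝ) (hN : 0 < N) : ∃ X : ℝ, 1 ≤ X ∧ ∀ ν, 0 ≤ ν → ν ≤ N → ∀ m : ℤ, X ≤ cc ν m - 1/2 →
    ∃ j, besselJ ν j = 0 ∧ |j - cc ν m| ≤ 1/2 := by
  obtain ⟨C, hC, h⟩ := uu_unif N hN
  have hR : 0 < √(2/π) := Real.sqrt_pos.2 (by positivity)
  refine ⟨C / (√(2/π) * (1/π)) + 1, by have : 0 < C / (√(2/π) * (1/π)) := by positivity
                                       linarith, fun ν hν hνN m hm => ?_⟩
  have hX : 0 < C / (√(2/π) * (1/π)) := by positivity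
  set ε := Real.cos (m * π) with hε
  have hε2 : ε * ε = 1 := eps_sq m
  have hs : 1/π ≤ Real.sin (1/2) := by
    have := Real.mul_le_sin (x := 1/2) (by norm_num) (by have := Real.pi_gt_three; linarith)
    calc 1/π = 2/π*(1/2) := by ring
      _ ≤ _ := this
  have hsmall : ∀ x, C / (√(2/π) * (1/π)) ≤ x → 0 < x → C / x ≤ √(2/π) * Real.sin (1/2) := by
    intro x hx hx0
    rw [div_le_iff₀ (by positivity)] at hx
    rw [div_le_iff₀ hx0]
    have : √(2/π) * (1/π) * x ≤ √(2/π) * Real.sin (1/2) * x := by gcongr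
    linarith
  have ha : ε * uu ν (cc ν m - 1/2) ≤ 0 := by
    have h1 := (h ν hν hνN (cc ν m - 1/2) (by linarith)).trans (hsmall _ (by linarith) (by linarith))
    have h2 := cos_cc ν (-(1/2)) m
    rw [← sub_eq_add_neg] at h2
    rw [h2, ← hε, Real.sin_neg] at h1
    have h3 : |ε * (uu ν (cc ν m - 1/2) - √(2/π) * (ε * -Real.sin (1/2)))| ≤ √(2/π) * Real.sin (1/2) := by
      rw [abs_mul]
      have : |ε| ≤ 1 := Real.abs_cos_le_one _
      calc _ ≤ 1 * _ := mul_le_mul_of_nonneg_right this (abs_nonneg _)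
        _ ≤ _ := by rw [one_mul]; exact h1
    have e : ε * (uu ν (cc ν m - 1/2) - √(2/π) * (ε * -Real.sin (1/2))) =
      ε * uu ν (cc ν m - 1/2) + √(2/π) * Real.sin (1/2) := by
      linear_combination (√(2/π) * Real.sin (1/2)) * hε2
    rw [e] at h3
    linarith [(abs_le.1 h3).2]
  have hb : 0 ≤ ε * uu ν (cc ν m + 1/2) := by
    have h1 := (h ν hν hνN (cc ν m + 1/2) (by linarith)).trans (hsmall _ (by linarith) (by linarith))
    have h2 := cos_cc ν (1/2) m
    rw [h2, ← hε] at h1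
    have h3 : |ε * (uu ν (cc ν m + 1/2) - √(2/π) * (ε * Real.sin (1/2)))| ≤ √(2/π) * Real.sin (1/2) := by
      rw [abs_mul]
      have : |ε| ≤ 1 := Real.abs_cos_le_one _
      calc _ ≤ 1 * _ := mul_le_mul_of_nonneg_right this (abs_nonneg _)
        _ ≤ _ := by rw [one_mul]; exact h1
    have e : ε * (uu ν (cc ν m + 1/2) - √(2/π) * (ε * Real.sin (1/2))) =
      ε * uu ν (cc ν m + 1/2) - √(2/π) * Real.sin (1/2) := by
      linear_combination (-√(2/π) * Real.sin (1/2)) * hε2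
    rw [e] at h3
    linarith [(abs_le.1 h3).1]
  have hcont : ContinuousOn (fun x => ε * uu ν x) (Icc (cc ν m - 1/2) (cc ν m + 1/2)) := by
    intro x hx
    have hx0 : 0 < x := by linarith [hx.1]
    exact ((uu_deriv hν hx0).continuousAt.const_mul ε).continuousWithinAt
  obtain ⟨j, hj, hj0⟩ := intermediate_value_Icc (by linarith) hcont ⟨ha, hb⟩
  refine ⟨j, ?_, ?_⟩
  · have hj1 : 0 < j := by linarith [hj.1]
    have hε0 : ε ≠ 0 := by intro h; rw [h] at hε2; norm_num at hε2
    have := (mul_eq_zero.1 hj0).resolve_left hε0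
    unfold uu at this
    exact (mul_eq_zero.1 this).resolve_left (Real.sqrt_pos.2 hj1).ne'
  · rw [abs_le]; constructor <;> linarith [hj.1, hj.2]

end BesselLoc

section BesselSturm
open Filter Topology

lemma inj_count {S T : Set ℝ} (hT : T.Finite) (h1 : ∀ z ∈ S, ∃ w ∈ T, w < z)
    (h2 : ∀ z ∈ S, ∀ z' ∈ S, z < z' → ∃ w ∈ T, z ≤ w ∧ w < z') : S.Finite ∧ S.ncard ≤ T.ncard := by
  have hex : ∀ z, ∃ w, z ∈ S → (w ∈ T ∧ w < z ∧ ∀ w' ∈ T, w' < z → w' ≤ w) := by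
    intro z
    by_cases hz : z ∈ S
    · obtain ⟨w0, hw0, hw0'⟩ := h1 z hz
      obtain ⟨w, hw, hmax⟩ := Set.exists_max_image (T ∩ Iio z) id (hT.inter_of_left _) ⟨w0, hw0, hw0'⟩
      exact ⟨w, fun _ => ⟨hw.1, hw.2, fun w' h h' => hmax w' ⟨h, h'⟩⟩⟩
    · exact ⟨0, fun h => absurd h hz⟩
  choose f hf using hex
  have hmap : ∀ z ∈ S, f z ∈ T := fun z hz => (hf z hz).1
  have hlt : ∀ z ∈ S, ∀ z' ∈ S, z < z' → f z < f z' := by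
    intro z hz z' hz' h
    obtain ⟨w, hw, hw1, hw2⟩ := h2 z hz z' hz' h
    exact ((hf z hz).2.1.trans_le hw1).trans_le ((hf z' hz').2.2 w hw hw2)
  have hinj : InjOn f S := by
    intro z hz z' hz' he
    rcases lt_trichotomy z z' with h | h | h
    · exact absurd he (hlt z hz z' hz' h).ne
    · exact h
    · exact absurd he (hlt z' hz' z hz h).ne'
  exact ⟨Set.Finite.of_injOn hmap hinj hT, Set.ncard_le_ncard_of_injOn f hmap hinj hT⟩

lemma rolle_up {ν z z' : ℝ} (hν : 0 ≤ ν) (hz : 0 ≤ z) (hzz : z < z') (h1 : besselJ (ν+1) z = 0)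
    (h2 : besselJ (ν+1) z' = 0) : ∃ w, z < w ∧ w < z' ∧ besselJ ν w = 0 := by
  have hc : ContinuousOn (fun x : ℝ => x ^ (ν+1) * besselJ (ν+1) x) (Icc z z') := by
    refine ContinuousOn.mul ?_ ((besselJ_cont (by linarith)).mono fun x hx => hz.trans hx.1)
    exact (Real.continuous_rpow_const (by linarith)).continuousOn
  obtain ⟨c, hc, hd⟩ := exists_hasDerivAt_eq_zero hzz hc (by simp [h1, h2])
    (f' := fun x => x ^ (ν+1) * besselJ ν x) (fun x hx => by
      have hx0 : 0 < x := lt_of_le_of_lt hz hx.1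
      refine ((Real.hasDerivAt_rpow_const (p := ν+1) (Or.inl hx0.ne')).mul (besselJ_deriv' hν hx0)).congr_deriv ?_
      rw [Real.rpow_sub_one hx0.ne']
      field_simp
      ring)
  refine ⟨c, hc.1, hc.2, (mul_eq_zero.1 hd).resolve_left ?_⟩
  exact (Real.rpow_pos_of_pos (lt_of_le_of_lt hz hc.1) _).ne'

lemma rolle_down {ν z z' : ℝ} (hν : 0 ≤ ν) (hz : 0 < z) (hzz : z < z') (h1 : besselJ ν z = 0)
    (h2 : besselJ ν z' = 0) : ∃ w, z < w ∧ w < z' ∧ besselJ (ν+1) w = 0 := by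
  have hder : ∀ x, 0 < x → HasDerivAt (fun x : ℝ => x ^ (-ν) * besselJ ν x)
      (-(x ^ (-ν) * besselJ (ν+1) x)) x := fun x hx0 => by
    refine ((Real.hasDerivAt_rpow_const (p := -ν) (Or.inl hx0.ne')).mul (besselJ_deriv hν hx0)).congr_deriv ?_
    rw [Real.rpow_sub_one hx0.ne']
    field_simp
    ring
  obtain ⟨c, hc, hd⟩ := exists_hasDerivAt_eq_zero hzz
    (fun x hx => (hder x (hz.trans_le hx.1)).continuousAt.continuousWithinAt) (by simp [h1, h2])
    (fun x hx => hder x (hz.trans hx.1))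
  refine ⟨c, hc.1, hc.2, (mul_eq_zero.1 (neg_eq_zero.1 hd)).resolve_left ?_⟩
  exact (Real.rpow_pos_of_pos (hz.trans hc.1) _).ne'

noncomputable def gg (ν x : ℝ) : ℝ := ν * besselJ ν x - x * besselJ (ν+1) x

lemma gg_deriv {ν x : ℝ} (hν : 0 ≤ ν) (hx : 0 < x) :
    HasDerivAt (gg ν) ((ν^2 - x^2)/x * besselJ ν x) x := by
  refine (((besselJ_deriv hν hx).const_mul ν).sub ((hasDerivAt_id x).mul (besselJ_deriv' hν hx))).congr_deriv ?_
  simp only [id]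
  field_simp
  ring

lemma besselJ_deriv_gg {ν x : ℝ} (hν : 0 ≤ ν) (hx : 0 < x) :
    HasDerivAt (besselJ ν) (gg ν x / x) x := by
  refine (besselJ_deriv hν hx).congr_deriv ?_
  unfold gg
  field_simp

lemma gg_cont {ν : ℝ} (hν : 0 < ν) : ContinuousOn (gg ν) (Ici 0) :=
  (continuousOn_const.mul (besselJ_cont hν)).sub (continuousOn_id.mul (besselJ_cont (by linarith)))

lemma deriv_nonneg_right {h : ℝ → ℝ} {d a b : ℝ} (hab : a < b) (hd : HasDerivAt h d a) (h0 : h a = 0)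
    (hp : ∀ x ∈ Ioo a b, 0 < h x) : 0 ≤ d := by
  have := (hasDerivAt_iff_tendsto_slope.1 hd).mono_left
    (nhdsWithin_mono a (show Ioi a ⊆ {a}ᶜ from fun x hx => ne_of_gt hx))
  refine ge_of_tendsto this ?_
  filter_upwards [Ioo_mem_nhdsGT hab] with x hx
  rw [slope_def_field, h0, sub_zero]
  exact div_nonneg (hp x hx).le (by linarith [hx.1])

lemma deriv_nonpos_left {h : ℝ → ℝ} {d a b : ℝ} (hab : a < b) (hd : HasDerivAt h d b) (h0 : h b = 0)
    (hp : ∀ x ∈ Ioo a b, 0 < h x) : d ≤ 0 := by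
  have := (hasDerivAt_iff_tendsto_slope.1 hd).mono_left
    (nhdsWithin_mono b (show Iio b ⊆ {b}ᶜ from fun x hx => ne_of_lt hx))
  refine le_of_tendsto this ?_
  filter_upwards [Ioo_mem_nhdsLT hab] with x hx
  rw [slope_def_field, h0, sub_zero]
  exact div_nonpos_of_nonneg_of_nonpos (hp x hx).le (by linarith [hx.2])

lemma sturm_core {ν1 ν2 a b s1 s2 : ℝ} (h1 : 0 < ν1) (h12 : ν1 < ν2) (ha : 0 ≤ a) (hab : a < b)
    (hJa : besselJ ν2 a = 0) (hJb : besselJ ν2 b = 0)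
    (hp1 : ∀ x ∈ Ioo a b, 0 < s1 * besselJ ν1 x) (hp2 : ∀ x ∈ Ioo a b, 0 < s2 * besselJ ν2 x) : False := by
  have h2 : 0 < ν2 := h1.trans h12
  set W : ℝ → ℝ := fun x => (s1 * besselJ ν1 x) * (s2 * gg ν2 x) - (s1 * gg ν1 x) * (s2 * besselJ ν2 x) with hW
  have hsub : Icc a b ⊆ Ici 0 := fun x hx => ha.trans hx.1
  have hWc : ContinuousOn W (Icc a b) := by
    refine ContinuousOn.mono ?_ hsub
    exact ((continuousOn_const.mul (besselJ_cont h1)).mul (continuousOn_const.mul (gg_cont h2))).sub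
      ((continuousOn_const.mul (gg_cont h1)).mul (continuousOn_const.mul (besselJ_cont h2)))
  have hWd : ∀ x ∈ Ioo a b, HasDerivAt W ((ν2^2-ν1^2)/x * ((s1 * besselJ ν1 x) * (s2 * besselJ ν2 x))) x := by
    intro x hx
    have hx0 : 0 < x := lt_of_le_of_lt ha hx.1
    refine ((((besselJ_deriv_gg h1.le hx0).const_mul s1).mul ((gg_deriv h2.le hx0).const_mul s2)).sub
      (((gg_deriv h1.le hx0).const_mul s1).mul ((besselJ_deriv_gg h2.le hx0).const_mul s2))).congr_deriv ?_
    field_simp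
    ring
  have hmono : StrictMonoOn W (Icc a b) := by
    refine strictMonoOn_of_deriv_pos (convex_Icc a b) hWc ?_
    intro x hx
    rw [interior_Icc] at hx
    rw [(hWd x hx).deriv]
    have hx0 : 0 < x := lt_of_le_of_lt ha hx.1
    have : 0 < ν2^2-ν1^2 := by nlinarith
    exact mul_pos (div_pos this hx0) (mul_pos (hp1 x hx) (hp2 x hx))
  have hlt := hmono (left_mem_Icc.2 hab.le) (right_mem_Icc.2 hab.le) hab
  have hclos : ∀ x ∈ Icc a b, 0 ≤ s1 * besselJ ν1 x := by
    intro x hx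
    have hc : ContinuousOn (fun x => s1 * besselJ ν1 x) (Icc a b) :=
      (continuousOn_const.mul (besselJ_cont h1)).mono hsub
    have hmem : x ∈ closure (Ioo a b) := by rw [closure_Ioo hab.ne]; exact hx
    have hne : (𝓝[Ioo a b] x).NeBot := mem_closure_iff_nhdsWithin_neBot.1 hmem
    have ht : Tendsto (fun x => s1 * besselJ ν1 x) (𝓝[Ioo a b] x) (𝓝 (s1 * besselJ ν1 x)) :=
      (hc x hx).mono_left (nhdsWithin_mono _ Ioo_subset_Icc_self)
    refine ge_of_tendsto ht ?_
    filter_upwards [self_mem_nhdsWithin] with y hy using (hp1 y hy).le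
  have hga : 0 ≤ s2 * gg ν2 a := by
    rcases ha.eq_or_lt with h | h
    · rw [← h]; simp [gg, besselJ_zero h2]
    · have hd := (besselJ_deriv_gg h2.le h).const_mul s2
      have := deriv_nonneg_right hab hd (by rw [hJa, mul_zero]) hp2
      have e : s2 * gg ν2 a = (s2 * (gg ν2 a / a)) * a := by field_simp
      rw [e]; exact mul_nonneg this h.le
  have hgb : s2 * gg ν2 b ≤ 0 := by
    have h : 0 < b := lt_of_le_of_lt ha hab
    have hd := (besselJ_deriv_gg h2.le h).const_mul s2
    have := deriv_nonpos_left hab hd (by rw [hJb, mul_zero]) hp2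
    have e : s2 * gg ν2 b = (s2 * (gg ν2 b / b)) * b := by field_simp
    rw [e]; exact mul_nonpos_of_nonpos_of_nonneg this h.le
  have e1 : 0 ≤ W a := by
    simp only [hW, hJa, mul_zero, sub_zero]
    exact mul_nonneg (hclos a (left_mem_Icc.2 hab.le)) hga
  have e2 : W b ≤ 0 := by
    simp only [hW, hJb, mul_zero, sub_zero]
    exact mul_nonpos_of_nonneg_of_nonpos (hclos b (right_mem_Icc.2 hab.le)) hgb
  linarith

lemma const_sign {f : ℝ → ℝ} {a b m : ℝ} (hf : ContinuousOn f (Ioo a b)) (hm : m ∈ Ioo a b)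
    (hne : ∀ x ∈ Ioo a b, f x ≠ 0) : ∃ s : ℝ, ∀ x ∈ Ioo a b, 0 < s * f x := by
  refine ⟨f m, fun x hx => ?_⟩
  by_contra hc
  push Not at hc
  have hcf : ContinuousOn (fun x => f m * f x) (Ioo a b) := continuousOn_const.mul hf
  have := isPreconnected_Ioo.intermediate_value hx hm hcf
  obtain ⟨y, hy, hy0⟩ := this ⟨hc, mul_self_nonneg (f m)⟩
  exact hne y hy ((mul_eq_zero.1 hy0).resolve_left (hne m hm))

lemma sturm {ν1 ν2 z z' : ℝ} (h1 : 0 < ν1) (h12 : ν1 < ν2) (hz : 0 ≤ z) (hzz : z < z')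
    (hJ : besselJ ν2 z = 0) (hJ' : besselJ ν2 z' = 0) : ∃ w, z < w ∧ w < z' ∧ besselJ ν1 w = 0 := by
  have h2 : 0 < ν2 := h1.trans h12
  by_contra hcon
  push Not at hcon
  have hm : ∃ m ∈ Ioo z z', besselJ ν2 m ≠ 0 := by
    by_contra hc
    push Not at hc
    have hmid : (z+z')/2 ∈ Ioo z z' := ⟨by linarith, by linarith⟩
    have hpos : 0 < (z+z')/2 := lt_of_le_of_lt hz hmid.1
    have hd := besselJ_deriv h2.le hpos
    have hd0 : HasDerivAt (besselJ ν2) 0 ((z+z')/2) := by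
      refine (hasDerivAt_const ((z+z')/2) (0:ℝ)).congr_of_eventuallyEq ?_
      filter_upwards [isOpen_Ioo.mem_nhds hmid] with y hy using hc y hy
    have := hd.unique hd0
    rw [hc _ hmid, mul_zero, zero_sub, neg_eq_zero] at this
    exact no_common h2.le hpos (hc _ hmid) this
  obtain ⟨m, hm, hm0⟩ := hm
  have hcJ := besselJ_cont h2
  have hK1 : IsCompact (Icc z m ∩ besselJ ν2 ⁻¹' {0}) := by
    have : IsClosed (Icc z m ∩ besselJ ν2 ⁻¹' {0}) :=
      (hcJ.mono fun x hx => hz.trans hx.1).preimage_isClosed_of_isClosed isClosed_Icc isClosed_singleton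
    exact isCompact_Icc.of_isClosed_subset this inter_subset_left
  have hK2 : IsCompact (Icc m z' ∩ besselJ ν2 ⁻¹' {0}) := by
    have : IsClosed (Icc m z' ∩ besselJ ν2 ⁻¹' {0}) :=
      (hcJ.mono fun x hx => (hz.trans hm.1.le).trans hx.1).preimage_isClosed_of_isClosed isClosed_Icc isClosed_singleton
    exact isCompact_Icc.of_isClosed_subset this inter_subset_left
  obtain ⟨a, ha, hamax⟩ := hK1.exists_isGreatest ⟨z, ⟨le_rfl, hm.1.le⟩, hJ⟩
  obtain ⟨b, hb, hbmin⟩ := hK2.exists_isLeast ⟨z', ⟨hm.2.le, le_rfl⟩, hJ'⟩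
  have hJa : besselJ ν2 a = 0 := ha.2
  have hJb : besselJ ν2 b = 0 := hb.2
  have ham : a < m := lt_of_le_of_ne ha.1.2 (fun h => hm0 (h ▸ hJa))
  have hmb : m < b := lt_of_le_of_ne hb.1.1 (fun h => hm0 (h ▸ hJb))
  have ha0 : 0 ≤ a := hz.trans ha.1.1
  have hsub : Ioo a b ⊆ Ici 0 := fun x hx => ha0.trans hx.1.le
  obtain ⟨s1, hs1⟩ := const_sign ((besselJ_cont h1).mono hsub) ⟨ham, hmb⟩ (fun x hx =>
    hcon x (lt_of_le_of_lt ha.1.1 hx.1) (lt_of_lt_of_le hx.2 hb.1.2))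
  obtain ⟨s2, hs2⟩ := const_sign (hcJ.mono hsub) ⟨ham, hmb⟩ (fun x hx h0 => by
    rcases le_total x m with h | h
    · have := hamax ⟨⟨ha.1.1.trans hx.1.le, h⟩, h0⟩
      linarith [hx.1]
    · have := hbmin ⟨⟨h, hx.2.le.trans hb.1.2⟩, h0⟩
      linarith [hx.2])
  exact sturm_core h1 h12 ha0 (ham.trans hmb) hJa hJb hs1 hs2

end BesselSturm

section BesselCount
open Filter Topology

def Zs (ν X : ℝ) : Set ℝ := {x : ℝ | 0 < x ∧ x < X ∧ besselJ ν x = 0}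
def Zb (ν X : ℝ) : Set ℝ := {x : ℝ | 0 < x ∧ x ≤ X ∧ besselJ ν x = 0}

lemma Zs_sub_Zb (ν X : ℝ) : Zs ν X ⊆ Zb ν X := fun _ h => ⟨h.1, h.2.1.le, h.2.2⟩

lemma count_up {ν X : ℝ} (hν : 0 ≤ ν) (hf : (Zs ν X).Finite) :
    (Zb (ν+1) X).Finite ∧ (Zb (ν+1) X).ncard ≤ (Zs ν X).ncard := by
  refine inj_count hf ?_ ?_
  · rintro z ⟨hz, hzX, h0⟩
    obtain ⟨w, h1, h2, h3⟩ := rolle_up hν le_rfl hz (besselJ_zero (by linarith)) h0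
    exact ⟨w, ⟨h1, h2.trans_le hzX, h3⟩, h2⟩
  · rintro z ⟨hz, hzX, h0⟩ z' ⟨hz', hzX', h0'⟩ hzz
    obtain ⟨w, h1, h2, h3⟩ := rolle_up hν hz.le hzz h0 h0'
    exact ⟨w, ⟨hz.trans h1, h2.trans_le hzX', h3⟩, h1.le, h2⟩

lemma count_sturm {ν1 ν2 X : ℝ} (h1 : 0 < ν1) (h12 : ν1 < ν2) (hf : (Zs ν1 X).Finite) :
    (Zb ν2 X).Finite ∧ (Zb ν2 X).ncard ≤ (Zs ν1 X).ncard := by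
  refine inj_count hf ?_ ?_
  · rintro z ⟨hz, hzX, h0⟩
    obtain ⟨w, h1, h2, h3⟩ := sturm h1 h12 le_rfl hz (besselJ_zero (by linarith)) h0
    exact ⟨w, ⟨h1, h2.trans_le hzX, h3⟩, h2⟩
  · rintro z ⟨hz, hzX, h0⟩ z' ⟨hz', hzX', h0'⟩ hzz
    obtain ⟨w, h1, h2, h3⟩ := sturm h1 h12 hz.le hzz h0 h0'
    exact ⟨w, ⟨hz.trans h1, h2.trans_le hzX', h3⟩, h1.le, h2⟩

lemma count_down {ν X : ℝ} (hν : 0 ≤ ν) (hf : (Zs (ν+1) X).Finite) :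
    (Zb ν X).Finite ∧ (Zb ν X).ncard ≤ (Zs (ν+1) X).ncard + 1 := by
  have := inj_count (S := Zb ν X) (T := insert 0 (Zs (ν+1) X)) (hf.insert 0) ?_ ?_
  · exact ⟨this.1, this.2.trans (Set.ncard_insert_le _ _)⟩
  · rintro z ⟨hz, hzX, h0⟩
    exact ⟨0, mem_insert _ _, hz⟩
  · rintro z ⟨hz, hzX, h0⟩ z' ⟨hz', hzX', h0'⟩ hzz
    obtain ⟨w, h1, h2, h3⟩ := rolle_down hν hz hzz h0 h0'
    exact ⟨w, mem_insert_of_mem _ ⟨hz.trans h1, h2.trans_le hzX', h3⟩, h1.le, h2⟩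

lemma half_zeros {x : ℝ} (hx : 0 < x) (h : besselJ (1/2) x = 0) : ∃ p : ℕ, x = (p+1) * π := by
  rw [half_zero hx] at h
  obtain ⟨n, hn⟩ := Real.sin_eq_zero_iff.1 h
  have : 0 < n := by
    by_contra hc
    push Not at hc
    have : (n:ℝ) ≤ 0 := by exact_mod_cast hc
    nlinarith [Real.pi_pos]
  obtain ⟨p, rfl⟩ : ∃ p : ℕ, n = p + 1 := ⟨(n-1).toNat, by omega⟩
  exact ⟨p, by rw [← hn]; push_cast; ring⟩

lemma half_zeros' (p : ℕ) : 0 < ((p:ℝ)+1) * π ∧ besselJ (1/2) (((p:ℝ)+1) * π) = 0 := by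
  have h : 0 < ((p:ℝ)+1) * π := by positivity
  refine ⟨h, (half_zero h).2 ?_⟩
  have := Real.sin_nat_mul_pi (p+1)
  push_cast at this
  exact this

lemma half_count {X : ℝ} (hX : 0 < X) : (Zs (1/2) X).Finite ∧ ((Zs (1/2) X).ncard : ℝ) ≤ X / π := by
  have hsub : Zs (1/2) X ⊆ (fun p : ℕ => ((p:ℝ)+1) * π) '' (Finset.range ⌊X/π⌋₊ : Set ℕ) := by
    rintro x ⟨hx, hxX, h0⟩
    obtain ⟨p, rfl⟩ := half_zeros hx h0
    refine ⟨p, ?_, rfl⟩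
    simp only [Finset.coe_range, mem_Iio]
    refine Nat.lt_of_succ_le (Nat.le_floor ?_)
    rw [le_div_iff₀ Real.pi_pos]
    push_cast
    exact hxX.le
  have hfin : ((fun p : ℕ => ((p:ℝ)+1) * π) '' (Finset.range ⌊X/π⌋₊ : Set ℕ)).Finite :=
    (Finset.finite_toSet _).image _
  refine ⟨hfin.subset hsub, ?_⟩
  have h1 := Set.ncard_le_ncard hsub hfin
  have h2 := Set.ncard_image_le (f := (fun p : ℕ => ((p:ℝ)+1) * π)) (Finset.finite_toSet (Finset.range ⌊X/π⌋₊))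
  rw [Set.ncard_coe_finset, Finset.card_range] at h2
  have h3 : ((Zs (1/2) X).ncard : ℝ) ≤ (⌊X/π⌋₊ : ℝ) := by exact_mod_cast h1.trans h2
  exact h3.trans (Nat.floor_le (by positivity))

lemma half_exact (p : ℕ) : (Zs (1/2) (((p:ℝ)+1) * π)).ncard = p := by
  have heq : Zs (1/2) (((p:ℝ)+1) * π) = (fun p : ℕ => ((p:ℝ)+1) * π) '' (Finset.range p : Set ℕ) := by
    ext x
    constructor
    · rintro ⟨hx, hxX, h0⟩
      obtain ⟨q, rfl⟩ := half_zeros hx h0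
      refine ⟨q, ?_, rfl⟩
      simp only [Finset.coe_range, mem_Iio]
      have := lt_of_mul_lt_mul_right hxX Real.pi_pos.le
      have : (q:ℝ) < p := by linarith
      exact_mod_cast this
    · rintro ⟨q, hq, rfl⟩
      simp only [Finset.coe_range, mem_Iio] at hq
      refine ⟨(half_zeros' q).1, ?_, (half_zeros' q).2⟩
      have : (q:ℝ) < p := by exact_mod_cast hq
      simp only
      gcongr
  rw [heq, Set.ncard_image_of_injective, Set.ncard_coe_finset, Finset.card_range]
  intro a b hab
  have := mul_right_cancel₀ Real.pi_ne_zero hab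
  have : (a:ℝ) = b := by linarith
  exact_mod_cast this

lemma Zb_fin {ν : ℝ} (hν : 0 ≤ ν) (X : ℝ) : (Zb ν X).Finite := by
  have hpos : ∀ ν, 1/2 < ν → ∀ X, (Zb ν X).Finite := by
    intro ν hν X
    rcases le_or_gt X 0 with hX | hX
    · convert Set.finite_empty (α := ℝ)
      ext x; constructor
      · rintro ⟨h1, h2, _⟩; linarith
      · intro h; exact absurd h (Set.notMem_empty x)
    · exact (count_sturm (by norm_num) hν (half_count hX).1).1
  exact (count_down hν ((hpos (ν+1) (by linarith) X).subset (Zs_sub_Zb _ _))).1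

lemma Zs_fin {ν : ℝ} (hν : 0 ≤ ν) (X : ℝ) : (Zs ν X).Finite := (Zb_fin hν X).subset (Zs_sub_Zb _ _)

lemma Zs_mono {ν X X' : ℝ} (hν : 0 ≤ ν) (h : X ≤ X') : (Zs ν X).ncard ≤ (Zs ν X').ncard :=
  Set.ncard_le_ncard (fun _ hx => ⟨hx.1, hx.2.1.trans_le h, hx.2.2⟩) (Zs_fin hν X')

lemma Zb_eq {ν j : ℝ} (hν : 0 ≤ ν) (hj : 0 < j) (h0 : besselJ ν j = 0) :
    (Zb ν j).ncard = (Zs ν j).ncard + 1 := by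
  have : Zb ν j = insert j (Zs ν j) := by
    ext x
    constructor
    · rintro ⟨h1, h2, h3⟩
      rcases h2.eq_or_lt with h | h
      · exact Or.inl h
      · exact Or.inr ⟨h1, h, h3⟩
    · rintro (h | h)
      · rw [h]; exact ⟨hj, le_rfl, h0⟩
      · exact Zs_sub_Zb _ _ h
  rw [this, Set.ncard_insert_of_notMem (fun h => lt_irrefl _ h.2.1) (Zs_fin hν j)]

lemma count_bound {ν X : ℝ} (hν : 0 ≤ ν) (hX : 0 < X) : ((Zs ν X).ncard : ℝ) ≤ X / π + 1 := by
  have hh := (half_count hX)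
  have h1 := (count_sturm (ν1 := 1/2) (ν2 := ν+1) (by norm_num) (by linarith) hh.1).2
  have h2 := (count_down hν (Zs_fin (by linarith) X)).2
  have h3 := Set.ncard_le_ncard (Zs_sub_Zb ν X) (Zb_fin hν X)
  have h4 := Set.ncard_le_ncard (Zs_sub_Zb (ν+1) X) (Zb_fin (by linarith) X)
  have h5 : (Zs ν X).ncard ≤ (Zs (1/2) X).ncard + 1 := by omega
  have h6 : ((Zs ν X).ncard : ℝ) ≤ (Zs (1/2) X).ncard + 1 := by exact_mod_cast h5
  linarith [hh.2]

def DD (ν X0 : ℝ) : Prop := ∀ j, X0 ≤ j → besselJ ν j = 0 → ∀ m : ℤ, |j - cc ν m| ≤ 1/2 →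
    ((Zs ν j).ncard : ℤ) = m - 1

lemma DD_mono {ν X Y : ℝ} (h : X ≤ Y) (hD : DD ν X) : DD ν Y :=
  fun j hj => hD j (h.trans hj)

lemma DD_half : DD (1/2) 1 := by
  intro j hj h0 m hm
  obtain ⟨p, rfl⟩ := half_zeros (by linarith) h0
  rw [half_exact]
  have e : (p+1) * π - cc (1/2) m = ((p+1-m : ℤ):ℝ) * π := by unfold cc; push_cast; ring
  rw [e, abs_mul, abs_of_pos Real.pi_pos] at hm
  have h1 : |((p+1-m : ℤ):ℝ)| < 1 := by
    nlinarith [Real.pi_gt_three, abs_nonneg ((p+1-m : ℤ):ℝ)]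
  rw [← Int.cast_abs] at h1
  have h2 : |(p+1-m : ℤ)| < 1 := by exact_mod_cast h1
  rw [Int.abs_lt_one_iff] at h2
  omega

def EE (ν XE : ℝ) : Prop := ∀ m : ℤ, XE ≤ cc ν m - 1/2 → ∃ j, besselJ ν j = 0 ∧ |j - cc ν m| ≤ 1/2

lemma cc_succ (ν : ℝ) (m : ℤ) : cc (ν+1) m = cc ν m + π/2 := by unfold cc; ring
lemma cc_int (ν : ℝ) (m : ℤ) : cc ν (m+1) = cc ν m + π := by unfold cc; push_cast; ring
lemma cc_int' (ν : ℝ) (m : ℤ) : cc ν (m-1) = cc ν m - π := by unfold cc; push_cast; ring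

lemma DD_up {ν X : ℝ} (hν : 0 ≤ ν) (hX : 1 ≤ X) (hE : EE ν X) (hD : DD ν X) : DD (ν+1) (X+5) := by
  intro j' hj' h0' m hm
  have p3 := Real.pi_gt_three
  have p4 := Real.pi_lt_four
  have hm' := abs_le.1 hm
  rw [cc_succ] at hm'
  obtain ⟨j, h0, hj⟩ := hE m (by linarith)
  obtain ⟨l, k0, hl⟩ := hE (m+1) (by rw [cc_int]; linarith)
  have hj2 := abs_le.1 hj
  have hl2 := abs_le.1 hl
  rw [cc_int] at hl2
  have a1 := hD j (by linarith) h0 m hj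
  have a2 := hD l (by linarith) k0 (m+1) hl
  have b1 := (count_up hν (Zs_fin hν j')).2
  rw [Zb_eq (by linarith) (by linarith) h0'] at b1
  have b2 := Zs_mono hν (show j' ≤ l by linarith)
  have b3 := (count_down hν (Zs_fin (show 0 ≤ ν+1 by linarith) j)).2
  rw [Zb_eq hν (by linarith) h0] at b3
  have b4 := Zs_mono (show 0 ≤ ν+1 by linarith) (show j ≤ j' by linarith)
  omega

lemma DD_down {ν X : ℝ} (hν : 0 ≤ ν) (hX : 1 ≤ X) (hE : EE (ν+1) X) (hD : DD (ν+1) X) : DD ν (X+5) := by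
  intro j hj h0 m hm
  have p3 := Real.pi_gt_three
  have p4 := Real.pi_lt_four
  have hm' := abs_le.1 hm
  have hν1 : 0 ≤ ν+1 := by linarith
  obtain ⟨l, l0, hl⟩ := hE m (by rw [cc_succ]; linarith)
  obtain ⟨k, k0, hk⟩ := hE (m-1) (by rw [cc_int', cc_succ]; linarith)
  have hl2 := abs_le.1 hl
  have hk2 := abs_le.1 hk
  rw [cc_succ] at hl2
  rw [cc_int', cc_succ] at hk2
  have a1 := hD l (by linarith) l0 m hl
  have a2 := hD k (by linarith) k0 (m-1) hk
  have b1 := (count_up hν (Zs_fin hν k)).2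
  rw [Zb_eq (by linarith) (by linarith) k0] at b1
  have b2 := Zs_mono hν (show k ≤ j by linarith)
  have b3 := (count_down hν (Zs_fin hν1 j)).2
  rw [Zb_eq hν (by linarith) h0] at b3
  have b4 := Zs_mono hν1 (show j ≤ l by linarith)
  omega

lemma DD_mid {ν X : ℝ} (h1 : 1/2 < ν) (h2 : ν < 3/2) (hX : 1 ≤ X) (hE : EE (3/2) X) (hD : DD (3/2) X) :
    DD ν (X+8) := by
  intro j hj h0 m hm
  have p3 := Real.pi_gt_three
  have p4 := Real.pi_lt_four
  have hm' := abs_le.1 hm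
  have c1 : cc ν m = π * m + π * (ν/2-1/4) := by unfold cc; ring
  have c2 : cc (3/2) (m-1) = π * m - π/2 := by unfold cc; push_cast; ring
  have c3 : 0 < π * (ν/2-1/4) := mul_pos Real.pi_pos (by linarith)
  have c4 : π * (ν/2-1/4) < π * (1/2) := by gcongr; linarith
  rw [c1] at hm'
  have hν : 0 ≤ ν := by linarith
  obtain ⟨k, k0, hk⟩ := hE (m-1) (by rw [c2]; linarith)
  have hk2 := abs_le.1 hk
  rw [c2] at hk2
  have a2 := hD k (by linarith) k0 (m-1) hk
  have b1 := (count_sturm (by linarith) h2 (Zs_fin hν k)).2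
  rw [Zb_eq (by norm_num) (by linarith) k0] at b1
  have b2 := Zs_mono hν (show k ≤ j by linarith)
  have hh := half_count (show 0 < j by linarith)
  have b3 := (count_sturm (by norm_num) h1 hh.1).2
  rw [Zb_eq hν (by linarith) h0] at b3
  have b4 : ((Zs (1/2) j).ncard : ℝ) < ((m+1 : ℤ) : ℝ) := by
    refine lt_of_le_of_lt hh.2 ?_
    rw [div_lt_iff₀ Real.pi_pos]
    push_cast
    linarith
  have b5 : ((Zs (1/2) j).ncard : ℤ) < m+1 := by exact_mod_cast b4
  omega

lemma DD_all (N : ℝ) (hN : 0 < N) : ∃ X : ℝ, 1 ≤ X ∧ ∀ ν, 0 ≤ ν → ν ≤ N → DD ν X := by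
  obtain ⟨XE, hXE1, hXE⟩ := zero_exist (N+2) (by linarith)
  have hE : ∀ ν, 0 ≤ ν → ν ≤ N+2 → ∀ X, XE ≤ X → EE ν X :=
    fun ν h0 h1 X hX m hm => hXE ν h0 h1 m (hX.trans hm)
  have base : ∀ ν, 1/2 ≤ ν → ν < 3/2 → DD ν (XE+5+8) := by
    intro ν h1 h2
    rcases h1.eq_or_lt with h | h
    · rw [← h]; exact DD_mono (by linarith) DD_half
    · have h3 := DD_up (ν := 1/2) (X := XE) (by norm_num) hXE1 (hE _ (by norm_num) (by linarith) _ le_rfl)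
        (DD_mono hXE1 DD_half)
      norm_num at h3
      exact DD_mid h h2 (by linarith) (hE _ (by norm_num) (by linarith) _ (by linarith)) h3
  have ind : ∀ p : ℕ, ∃ X, XE ≤ X ∧ ∀ ν : ℝ, 1/2 ≤ ν → ν < 3/2 + (p:ℝ) → ν ≤ N+2 → DD ν X := by
    intro p
    induction p with
    | zero => exact ⟨XE+5+8, by linarith, fun ν h1 h2 _ => base ν h1 (by simpa using h2)⟩
    | succ p ih =>
      obtain ⟨X, hX, h⟩ := ih
      refine ⟨X+5+5+8, by linarith, fun ν h1 h2 h3 => ?_⟩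
      push_cast at h2
      rcases lt_or_ge ν (3/2) with h4 | h4
      · exact DD_mono (by linarith) (base ν h1 h4)
      · have := DD_up (ν := ν-1) (X := X) (by linarith) (by linarith)
          (hE _ (by linarith) (by linarith) _ hX) (h (ν-1) (by linarith) (by linarith) (by linarith))
        rw [sub_add_cancel] at this
        exact DD_mono (by linarith) this
  obtain ⟨p, hp⟩ := exists_nat_gt (N+2)
  obtain ⟨X, hX, h⟩ := ind p
  refine ⟨X+5, by linarith, fun ν h1 h2 => ?_⟩
  rcases lt_or_ge ν (1/2) with h4 | h4
  · exact DD_down h1 (by linarith) (hE _ (by linarith) (by linarith) _ hX)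
      (h (ν+1) (by linarith) (by linarith) (by linarith))
  · exact DD_mono (by linarith) (h ν h4 (by linarith) (by linarith))

lemma xstar_approx {ν x q : ℝ} (hν : 0 ≤ ν) (hνx : ν ≤ x) (hq : 0 < q) (h : x * gfun (ν / x) = q) :
    q ≤ x ∧ |x - (π * q + π * ν / 2)| ≤ 3 * ν^2 / x := by
  have hx : 0 < x := by
    rcases (hν.trans hνx).eq_or_lt with h0 | h0
    · rw [← h0, zero_mul] at h; linarith
    · exact h0
  set t := ν / x with ht
  have ht0 : 0 ≤ t := by positivity
  have ht1 : t ≤ 1 := (div_le_one hx).2 hνx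
  have p3 := Real.pi_gt_three
  have p4 := Real.pi_lt_four
  have hνt : ν = t * x := by rw [ht]; field_simp
  unfold gfun at h
  have hs1 : √(1-t^2) ≤ 1 := by exact Real.sqrt_le_one.2 (by nlinarith [sq_nonneg t])
  have hs2 : 1 - t^2 ≤ √(1-t^2) := by
    apply Real.le_sqrt_of_sq_le
    nlinarith [mul_nonneg (sq_nonneg t) (show 0 ≤ 1 - t^2 by nlinarith)]
  have hac : Real.arccos t = π/2 - Real.arcsin t := Real.arccos_eq_pi_div_two_sub_arcsin t
  have has0 : 0 ≤ Real.arcsin t := Real.arcsin_nonneg.2 ht0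
  have has1 : Real.arcsin t ≤ π/2 * t := by
    have h1 := Real.mul_le_sin has0 (Real.arcsin_le_pi_div_two t)
    rw [Real.sin_arcsin (by linarith) ht1] at h1
    have : Real.arcsin t = π/2 * (2/π * Real.arcsin t) := by field_simp
    rw [this]; gcongr
  have hac0 : 0 ≤ Real.arccos t := Real.arccos_nonneg t
  have hpq : x * (√(1-t^2) - t * Real.arccos t) = π * q := by
    rw [← h]; field_simp
  constructor
  · have : √(1-t^2) - t * Real.arccos t ≤ 1 := by nlinarith [mul_nonneg ht0 hac0]
    have : π * q ≤ x := by rw [← hpq]; nlinarith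
    nlinarith
  · have e : x - (π * q + π * ν / 2) = x * ((1 - √(1-t^2)) - t * Real.arcsin t) := by
      rw [← hpq, hac, hνt]; ring
    have e2 : 3 * ν^2 / x = x * (3 * t^2) := by rw [hνt]; field_simp
    rw [e, e2, abs_mul, abs_of_pos hx]
    gcongr
    have : t * Real.arcsin t ≤ 2 * t^2 := by
      have : t * Real.arcsin t ≤ t * (π/2*t) := by gcongr
      nlinarith [sq_nonneg t]
    have := mul_nonneg ht0 has0
    rw [abs_le]; constructor <;> nlinarith [sq_nonneg t]

end BesselCount

/-- approximation `j_{ν,k} = F(ν, k - 1/4) + O(1/(ν+k))` for bounded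
`0 ≤ ν ≤ N` and large `k`. -/
theorem zero_minkowski_approx_small_nu (N : ℝ) (hN : 0 < N) :
    ∃ K C : ℝ, 0 < K ∧ 0 < C ∧ ∀ ν : ℝ, 0 ≤ ν → ν ≤ N → ∀ k : ℕ, K ≤ (k : ℝ) →
      ∀ j : ℝ, IsKthZero ν k j →
      ∀ xstar : ℝ, ν ≤ xstar → xstar * gfun (ν / xstar) = (k : ℝ) - 1 / 4 →
      |j - xstar| ≤ C / (ν + (k : ℝ)) := by
  obtain ⟨C, hC, hloc⟩ := zero_loc N hN
  obtain ⟨X, hX, hD⟩ := DD_all N hN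
  refine ⟨X + 2*C + 3, (C + 6*N^2) * (N+1), by linarith, by positivity, ?_⟩
  intro ν hν hνN k hk j hj xstar hx hxs
  obtain ⟨hj0, hJ, hcard⟩ := hj
  have p3 := Real.pi_gt_three
  have hk3 : (3:ℝ) ≤ k := by linarith
  have hk3' : 3 ≤ k := by exact_mod_cast hk3
  have hcard' : (Zs ν j).ncard = k - 1 := hcard
  have hjk : (k:ℝ) ≤ j := by
    have h1 := count_bound hν hj0
    rw [hcard', Nat.cast_sub (by omega)] at h1
    push_cast at h1
    have h2 : (k:ℝ) - 2 ≤ j / π := by linarith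
    rw [le_div_iff₀ Real.pi_pos] at h2
    nlinarith
  have hk0 : (0:ℝ) < k := by linarith
  obtain ⟨m, hm⟩ := hloc ν hν hνN j (by linarith) hJ
  have hm1 : |j - cc ν m| ≤ C / k := hm.trans (by gcongr)
  have hm2 : |j - cc ν m| ≤ 1/2 := hm1.trans (by rw [div_le_iff₀ hk0]; linarith)
  have hmk := hD ν hν hνN j (by linarith) hJ m hm2
  rw [hcard'] at hmk
  have hmk' : m = (k:ℤ) := by omega
  subst hmk'
  obtain ⟨hq, hxa⟩ := xstar_approx hν hx (by linarith) hxs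
  have hx2 : (k:ℝ)/2 ≤ xstar := by linarith
  have hxb : |xstar - cc ν k| ≤ 6 * N^2 / k := by
    have e : cc ν k = π * ((k:ℝ) - 1/4) + π * ν / 2 := by unfold cc; push_cast; ring
    rw [e]
    refine hxa.trans ?_
    calc 3 * ν^2 / xstar ≤ 3 * N^2 / (k/2) := by gcongr
      _ = 6 * N^2 / k := by field_simp; norm_num
  have hfin : |j - xstar| ≤ (C + 6*N^2) / k := by
    have := abs_sub_le j (cc ν k) xstar
    rw [abs_sub_comm (cc ν k)] at this
    rw [add_div]
    linarith
  refine hfin.trans ?_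
  rw [div_le_div_iff₀ hk0 (by linarith), mul_assoc]
  refine mul_le_mul_of_nonneg_left ?_ (by positivity)
  nlinarith
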